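/- Let k ≥ 4 be an integer, let H be a 2-contractible ℓ-overlapping k-tree with cross-cut number σ = σ(H), and let p = p(n) ∈ [0,1] satisfy p(n)·n^{k−ℓ−1}/(log n)² → ∞ as n → ∞. Then for every ε > 0, the probability that (σ−1−ε)·p·C(n,k−1) ≤ ex(G^(k)(n,p), H) ≤ (σ−1+ε)·p·C(n,k−1) tends to 1 as n → ∞; that is, with high probability ex(G^(k)(n,p), H) = (σ−1+o(1))·p·C(n,k−1). -/

import Mathlib

open Finset Filter

attribute [local instance] Classical.propDecidable

/-- The vertex set `[n] = {1,…,n}`. -/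
def vtx (n : ℕ) : Finset ℕ := Finset.Icc 1 n

/-- `F` is a `k`-graph on `[n]`: a family of `k`-element subsets of `[n]`. -/
def IsKGraphOn (k n : ℕ) (F : Finset (Finset ℕ)) : Prop :=
  ∀ E ∈ F, E ⊆ vtx n ∧ E.card = k

/-- The vertex set of a hypergraph (union of its edges). -/
def vertexSet {α : Type} [DecidableEq α] (H : Finset (Finset α)) : Finset α := H.sup id

/-- The degree of a vertex: the number of edges containing it. -/
def vdeg {α : Type} [DecidableEq α] (H : Finset (Finset α)) (v : α) : ℕ :=
  (H.filter fun E => v ∈ E).card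

/-- Hypertrees, defined recursively: a single edge is a hypertree, and a hypertree grows
by adding a new leaf edge `E` whose intersection with the current vertex set equals its
intersection with some existing (parent) edge `F`. -/
inductive IsHypertree {α : Type} [DecidableEq α] : Finset (Finset α) → Prop
  | single (E : Finset α) : IsHypertree {E}
  | grow {H : Finset (Finset α)} (E F : Finset α) (hH : IsHypertree H) (hE : E ∉ H)
      (hF : F ∈ H) (hint : E ∩ vertexSet H = E ∩ F) : IsHypertree (insert E H)

/-- A `k`-tree: a `k`-uniform hypertree. -/
def IsKTree {α : Type} [DecidableEq α] (k : ℕ) (H : Finset (Finset α)) : Prop :=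
  IsHypertree H ∧ ∀ E ∈ H, E.card = k

/-- A hypergraph is 2-contractible if every edge contains at least two vertices of degree 1. -/
def TwoContractible {α : Type} [DecidableEq α] (H : Finset (Finset α)) : Prop :=
  ∀ E ∈ H, 2 ≤ (E.filter fun v => vdeg H v = 1).card

/-- `S` is a cross-cut of `H`: every edge meets `S` in exactly one vertex. -/
def IsCrosscut {α : Type} [DecidableEq α] (H : Finset (Finset α)) (S : Finset α) : Prop :=
  ∀ E ∈ H, (E ∩ S).card = 1

/-- `σ` is the cross-cut number of `H`: the minimum size of a cross-cut. -/
def IsCrosscutNumber {α : Type} [DecidableEq α] (H : Finset (Finset α)) (σ : ℕ) : Prop :=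
  IsLeast {m | ∃ S : Finset α, IsCrosscut H S ∧ S.card = m} σ

/-- A hypergraph is `ℓ`-overlapping if any two distinct edges meet in at most `ℓ` vertices. -/
def Overlapping {α : Type} [DecidableEq α] (ℓ : ℕ) (H : Finset (Finset α)) : Prop :=
  ∀ E ∈ H, ∀ F ∈ H, E ≠ F → (E ∩ F).card ≤ ℓ

/-- `K` is (the edge set of) a copy of `H`, i.e. the image of `H` under a map that is
injective on the vertex set of `H`. -/
def IsCopyOf {α : Type} [DecidableEq α] (H : Finset (Finset α)) (K : Finset (Finset ℕ)) : Prop :=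
  ∃ φ : α → ℕ, Set.InjOn φ ↑(vertexSet H) ∧ K = H.image fun E => E.image φ

/-- `F` contains no subgraph isomorphic to `H`. -/
def HFree {α : Type} [DecidableEq α] (H : Finset (Finset α)) (F : Finset (Finset ℕ)) : Prop :=
  ∀ K ⊆ F, ¬ IsCopyOf H K

/-- The collection of copies of `H` in `F` (as distinct subgraphs of `F`). -/
noncomputable def copies {α : Type} [DecidableEq α] (H : Finset (Finset α))
    (F : Finset (Finset ℕ)) : Finset (Finset (Finset ℕ)) :=
  F.powerset.filter (IsCopyOf H)

/-- The number of `H`-free `k`-graphs on the vertex set `[n]`. -/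
noncomputable def forb {α : Type} [DecidableEq α] (n k : ℕ) (H : Finset (Finset α)) : ℕ :=
  (((vtx n).powersetCard k).powerset.filter (HFree H)).card

/-- `H` is a `k`-uniform linear cycle of length `ℓ`. -/
def IsLinearCycle {α : Type} [DecidableEq α] (k ℓ : ℕ) (H : Finset (Finset α)) : Prop :=
  ∃ E : ℕ → Finset α,
    (∀ i < ℓ, (E i).card = k) ∧
    (∀ i < ℓ, ∀ j < ℓ, i ≠ j → E i ≠ E j) ∧
    (∀ i < ℓ, (E i ∩ E ((i + 1) % ℓ)).card = 1) ∧
    (∀ i < ℓ, ∀ j < ℓ, i ≠ j → E i ∩ E ((i + 1) % ℓ) ≠ E j ∩ E ((j + 1) % ℓ)) ∧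
    (∀ i < ℓ, ∀ j < ℓ, i ≠ j → (i + 1) % ℓ ≠ j → (j + 1) % ℓ ≠ i → Disjoint (E i) (E j)) ∧
    H = (Finset.range ℓ).image E

/-- `(X 0, …, X (k-1))` is a `k`-partition of `F`. -/
def IsKPartition (k : ℕ) (F : Finset (Finset ℕ)) (X : Fin k → Finset ℕ) : Prop :=
  (∀ i j, i ≠ j → Disjoint (X i) (X j)) ∧ ∀ E ∈ F, ∀ i, (E ∩ X i).card = 1

/-- The `J`-projection of an edge. -/
def projJ {k : ℕ} (X : Fin k → Finset ℕ) (J : Finset (Fin k)) (E : Finset ℕ) : Finset ℕ :=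
  E ∩ J.sup X

/-- The pattern of a vertex set. -/
def pattern {k : ℕ} (X : Fin k → Finset ℕ) (D : Finset ℕ) : Finset (Fin k) :=
  Finset.univ.filter fun i => (D ∩ X i).Nonempty

/-- `MI(F)`: the patterns of intersections of pairs of distinct edges. -/
noncomputable def MI {k : ℕ} (F : Finset (Finset ℕ)) (X : Fin k → Finset ℕ) :
    Finset (Finset (Fin k)) :=
  ((F ×ˢ F).filter fun p => p.1 ≠ p.2).image fun p => pattern X (p.1 ∩ p.2)

/-- The link of a vertex set `D` in `F`. -/
def link {α : Type} [DecidableEq α] (F : Finset (Finset α)) (D : Finset α) :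
    Finset (Finset α) :=
  (F.filter fun E => D ⊆ E).image fun E => E \ D

/-- The degree of a vertex set `D` in `F`: the size of its link. -/
def setDeg {α : Type} [DecidableEq α] (F : Finset (Finset α)) (D : Finset α) : ℕ :=
  (link F D).card

/-- A nonempty hypergraph is `s`-diverse if every vertex has degree less than `|H|/s`. -/
def SDiverse {α : Type} [DecidableEq α] (s : ℕ) (H : Finset (Finset α)) : Prop :=
  H.Nonempty ∧ ∀ v : α, s * vdeg H v < H.card

/-- `D` is `s`-strong in `F` if its link is `s`-diverse. -/
def SStrong {α : Type} [DecidableEq α] (s : ℕ) (F : Finset (Finset α)) (D : Finset α) : Prop :=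
  SDiverse s (link F D)

/-- `F`, with `k`-partition `X`, is `s`-super-homogeneous: for every `J ∈ MI(F)` and every
edge `E ∈ F`, the projection `E_J` is `s`-strong and `d_F(E_J) ≥ max{s, |F|/(2k·n^|J|)}`. -/
def SuperHomogeneous (n k s : ℕ) (F : Finset (Finset ℕ)) (X : Fin k → Finset ℕ) : Prop :=
  ∀ J ∈ MI F X, ∀ E ∈ F,
    SStrong s F (projJ X J E) ∧
    s ≤ setDeg F (projJ X J E) ∧
    (F.card : ℝ) / (2 * k * (n : ℝ) ^ J.card) ≤ (setDeg F (projJ X J E) : ℝ)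

/-- The rank of a family of subsets of `[k]`: the minimum size of a set `D ⊆ [k]` contained
in no member of the family. -/
noncomputable def rankFam (k : ℕ) (𝒥 : Finset (Finset (Fin k))) : ℕ :=
  sInf {d | ∃ D : Finset (Fin k), D.card = d ∧ ∀ J ∈ 𝒥, ¬ D ⊆ J}

/-- A family of subsets of `[k]` is of type 1 if it contains the full power set of some
`(k-2)`-set `B`. -/
def TypeOne (k : ℕ) (𝒥 : Finset (Finset (Fin k))) : Prop :=
  ∃ B : Finset (Fin k), B.card = k - 2 ∧ ∀ S ⊆ B, S ∈ 𝒥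

/-- The constant `c(k,s) = k!/(k^k·(2s(1+2^k))^(2^k))`. -/
noncomputable def cks (k s : ℕ) : ℝ :=
  (Nat.factorial k : ℝ) / ((k : ℝ) ^ k * (2 * (s : ℝ) * (1 + 2 ^ k)) ^ (2 ^ k))

/-- Degree of a set of vertices in a (uniform) hypergraph `K`: number of edges containing it. -/
def uDeg {α : Type} [DecidableEq α] (K : Finset (Finset α)) (S : Finset α) : ℕ :=
  (K.filter fun e => S ⊆ e).card

/-- A `t`-uniform hypergraph is `d`-graded if `d_K(S) ≤ d^(t-|S|)` for all `S` with
`1 ≤ |S| ≤ t`. -/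
def Graded {α : Type} [DecidableEq α] (t : ℕ) (d : ℝ) (K : Finset (Finset α)) : Prop :=
  ∀ S : Finset α, 1 ≤ S.card → S.card ≤ t → (uDeg K S : ℝ) ≤ d ^ (t - S.card)

/-- `S` is saturated by `K`: `d_K(S) = ⌊d^(t-|S|)⌋`. -/
def Saturated {α : Type} [DecidableEq α] (t : ℕ) (d : ℝ) (K : Finset (Finset α))
    (S : Finset α) : Prop :=
  uDeg K S = ⌊d ^ (t - S.card)⌋₊

/-- `S` is admissible: no nonempty subset of `S` is saturated. -/
def Admissible {α : Type} [DecidableEq α] (t : ℕ) (d : ℝ) (K : Finset (Finset α))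
    (S : Finset α) : Prop :=
  ∀ S' ⊆ S, S'.Nonempty → ¬ Saturated t d K S'

/-- `Z_K(S)`: the vertices `v` such that `S ∪ {v}` is inadmissible and `{v}` is not
saturated. -/
noncomputable def Zset {α : Type} [DecidableEq α] (t : ℕ) (d : ℝ) (K : Finset (Finset α))
    (S : Finset α) : Finset α :=
  (vertexSet K).filter fun v => ¬ Admissible t d K (insert v S) ∧ ¬ Saturated t d K {v}

/-- `ex(G,H)`: the maximum number of edges of an `H`-free subgraph of `G`. -/
noncomputable def exIn {α : Type} [DecidableEq α] (H : Finset (Finset α))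
    (G : Finset (Finset ℕ)) : ℕ :=
  (G.powerset.filter (HFree H)).sup Finset.card

/-- The probability, in the random `k`-graph `G^(k)(n,p)` (each `k`-subset of `[n]` is an
edge independently with probability `p`), of the event `A`. -/
noncomputable def probEvent (k n : ℕ) (p : ℝ) (A : Finset (Finset ℕ) → Prop) : ℝ :=
  ∑ G ∈ ((vtx n).powersetCard k).powerset.filter A,
    p ^ G.card * (1 - p) ^ (((vtx n).powersetCard k).card - G.card)

/-!
Call a system of edges strong if the shared part of every edge can be prolonged to further edges
of the system that avoid any bounded set of vertices. In a strong system every `k`-tree embeds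
greedily, edge by edge. Hence no subsystem of an `H`-free graph is strong, and peeling off
failures one at a time gives a decision list whose rules are indexed by sets of at most `ℓ`
vertices and which makes a correct prediction about every edge. There are only `n ^ O(n ^ ℓ)` such
lists, so they serve as codes for containers.

The first list uses the two vertices of degree one in each edge of `H`: by Kruskal–Katona, all but
`o(n ^ (k - 1))` of the edges compatible with it meet a bounded set of heavy vertices in exactly
one vertex. For each `σ`-set `Q` of heavy vertices, a second list, obtained from a cross-cut of
size `σ`, predicts for almost every `(k - 1)`-set a vertex of `Q` that does not extend it to an
edge. So at most `σ - 1` heavy vertices extend a typical `(k - 1)`-set, and each container has at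
most `(σ - 1 + o(1)) * C(n, k - 1)` edges. Chernoff's inequality and a union bound over the
containers give the upper bound; the `k`-sets meeting a fixed `(σ - 1)`-set in one vertex, which
form an `H`-free graph by minimality of `σ`, give the lower bound.
-/

variable {α : Type} {β γ ι κ : Type*}

section TreeEmbedding

variable [DecidableEq α] [DecidableEq β]

/-- An edge with a marked subset, its core, and a label. In a system of flags only the vertices
of the core may be shared with other edges when a hypertree is built up. -/
structure LabelledFlag (γ β : Type*) where
  label : γ
  edge : Finset β
  core : Finset β

/-- Every small subset of a core extends to a flag of the system with any prescribed label in `Q`,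
avoiding any further set of at most `s` vertices. -/
def IsStrong (ℓ s : ℕ) (Q : Finset γ) (P : Set (LabelledFlag γ β)) : Prop :=
  ∀ q ∈ P, ∀ A ⊆ q.core, #A ≤ ℓ → ∀ x ∈ Q, ∀ T : Finset β, #T ≤ s →
    ∃ q' ∈ P, q'.label = x ∧ A ⊆ q'.core ∧ q'.edge ∩ T ⊆ A

lemma vertexSet_insert (E : Finset α) (H : Finset (Finset α)) :
    vertexSet (insert E H) = E ∪ vertexSet H :=
  sup_insert

lemma subset_vertexSet {E : Finset α} {H : Finset (Finset α)} (hE : E ∈ H) : E ⊆ vertexSet H :=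
  le_sup (f := id) hE

lemma IsHypertree.nonempty {H : Finset (Finset α)} (hH : IsHypertree H) : H.Nonempty := by
  cases hH <;> simp

lemma exists_injOn_image_eq_of_eqOn {A U : Finset ι} {D : Finset β} {φ : ι → β}
    (hAU : A ⊆ U) (hφ : Set.InjOn φ A) (hAD : A.image φ ⊆ D) (hUD : #U = #D) :
    ∃ g : ι → β, Set.InjOn g U ∧ U.image g = D ∧ Set.EqOn g φ A := by
  obtain ⟨e, he⟩ := exists_equiv_extend_of_card_eq (α := U) (t := D) (by simpa using hUD)
    (s := A.subtype (· ∈ U)) (f := fun u => φ u)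
    (image_subset_iff.2 fun a ha => hAD (mem_image_of_mem φ (mem_subtype.1 ha)))
    fun a ha b hb hab => Subtype.ext <| hφ (by simpa using ha) (by simpa using hb) hab
  refine ⟨fun v => if hv : v ∈ U then e ⟨v, hv⟩ else φ v, fun u hu v hv huv => ?_, ?_,
    fun v hv => ?_⟩
  · simpa [mem_coe.1 hu, mem_coe.1 hv, Subtype.ext_iff] using huv
  · ext y
    simp only [mem_image]
    constructor
    · rintro ⟨v, hv, rfl⟩
      simp [hv]
    · intro hy
      exact ⟨e.symm ⟨y, hy⟩, (e.symm ⟨y, hy⟩).2, by simp⟩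
  · simpa [hAU hv] using he ⟨v, hAU hv⟩ (by simpa using hv)

lemma exists_injOn_union_image_eq [DecidableEq ι] {W U : Finset ι} {D : Finset β} {φ g : ι → β}
    (hφ : Set.InjOn φ W) (hg : Set.InjOn g U) (hgD : U.image g = D)
    (hgφ : Set.EqOn g φ ↑(U ∩ W)) (hDW : D ∩ W.image φ ⊆ (U ∩ W).image φ) :
    ∃ ψ : ι → β, Set.EqOn ψ φ W ∧ Set.EqOn ψ g U ∧ Set.InjOn ψ ↑(W ∪ U) := by
  have hW : Set.EqOn (W.piecewise φ g) φ W := fun v hv => piecewise_eq_of_mem _ _ _ hv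
  have hU : Set.EqOn (W.piecewise φ g) g U := fun v hv => by
    by_cases hvW : v ∈ W
    · rw [hW hvW, hgφ (mem_inter.2 ⟨hv, hvW⟩)]
    · exact piecewise_eq_of_notMem _ _ _ hvW
  have hcross : ∀ u ∈ W, ∀ v ∈ U, φ u = g v → u = v := fun u hu v hv huv => by
    obtain ⟨z, hz, hzu⟩ := mem_image.1 <| hDW <| mem_inter.2
      ⟨hgD ▸ mem_image_of_mem g hv, huv ▸ mem_image_of_mem φ hu⟩
    have hzU := mem_inter.1 hz
    rw [← hφ hzU.2 hu (hzu.trans huv.symm)]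
    exact hg hzU.1 hv ((hgφ hz).trans hzu)
  refine ⟨W.piecewise φ g, hW, hU, fun u hu v hv huv => ?_⟩
  rcases mem_union.1 hu with huW | huU <;> rcases mem_union.1 hv with hvW | hvU
  · exact hφ huW hvW (by rwa [hW huW, hW hvW] at huv)
  · exact hcross u huW v hvU (by rwa [hW huW, hU hvU] at huv)
  · exact (hcross v hvW u huU (by rw [hU huU, hW hvW] at huv; exact huv.symm)).symm
  · exact hg huU hvU (by rwa [hU huU, hU hvU] at huv)

lemma exists_injOn_extend_flag [DecidableEq ι] {W U M : Finset ι} {D B : Finset β} {φ : ι → β}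
    (hφ : Set.InjOn φ W) (hBD : B ⊆ D) (hUD : #U = #D) (hMB : #(U ∩ M) ≤ #B)
    (hUWM : U ∩ W ⊆ M) (hUWB : (U ∩ W).image φ ⊆ B) (hDW : D ∩ W.image φ ⊆ (U ∩ W).image φ) :
    ∃ ψ : ι → β, Set.EqOn ψ φ W ∧ Set.InjOn ψ ↑(W ∪ U) ∧ U.image ψ = D ∧
      (U ∩ M).image ψ ⊆ B := by
  have hsub : U ∩ W ⊆ U ∩ M := subset_inter inter_subset_left hUWM
  have hφU : Set.InjOn φ ↑(U ∩ W) := hφ.mono (coe_subset.2 inter_subset_right)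
  obtain ⟨B', hUWB', hB'B, hB'⟩ := exists_subsuperset_card_eq hUWB
    (card_image_le.trans (card_le_card hsub)) hMB
  obtain ⟨f, hf, hfB, hfφ⟩ := exists_injOn_image_eq_of_eqOn hsub hφU hUWB' hB'.symm
  obtain ⟨g, hg, hgD, hgf⟩ := exists_injOn_image_eq_of_eqOn inter_subset_left hf
    (hfB.subset.trans (hB'B.trans hBD)) hUD
  obtain ⟨ψ, hψφ, hψg, hψ⟩ := exists_injOn_union_image_eq hφ hg hgD
    (fun v hv => (hgf (hsub hv)).trans (hfφ hv)) hDW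
  refine ⟨ψ, hψφ, hψ, (image_congr hψg).trans hgD, ?_⟩
  rw [image_congr ((hψg.mono (coe_subset.2 inter_subset_left)).trans hgf), hfB]
  exact hB'B

/-- The vertices in `S` are deleted from the edges of the hypertree; they are embedded
separately, by means of the labels. -/
def IsFlagEmbedding (S M : Finset α) (lab : Finset α → γ) (P : Set (LabelledFlag γ β))
    (H : Finset (Finset α)) (φ : α → β) : Prop :=
  Set.InjOn φ ↑(vertexSet H \ S) ∧ ∀ E ∈ H, ∃ q ∈ P, q.label = lab E ∧
    (E \ S).image φ = q.edge ∧ ((E \ S) ∩ M).image φ ⊆ q.core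

variable {S M : Finset α} {lab : Finset α → γ} {P : Set (LabelledFlag γ β)} {H : Finset (Finset α)}

lemma IsFlagEmbedding.exists_insert {d m ℓ s : ℕ} {Q : Finset γ} {E F : Finset α} {φ : α → β}
    (hφ : IsFlagEmbedding S M lab P H φ) (hstrong : IsStrong ℓ s Q P)
    (hP : ∀ q ∈ P, q.core ⊆ q.edge ∧ #q.edge = d ∧ m ≤ #q.core)
    (hF : F ∈ H) (hint : E ∩ vertexSet H = E ∩ F) (hEd : #(E \ S) = d)
    (hEm : #((E \ S) ∩ M) ≤ m) (hlab : lab E ∈ Q) (hEF : #(E ∩ F) ≤ ℓ)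
    (hEFM : (E ∩ F) \ S ⊆ M) (hs : #(vertexSet H) ≤ s) :
    ∃ ψ, IsFlagEmbedding S M lab P (insert E H) ψ := by
  obtain ⟨hinj, hedges⟩ := hφ
  obtain ⟨qF, hqF, -, -, hqFcore⟩ := hedges F hF
  have hinter : (E \ S) ∩ (vertexSet H \ S) = (E ∩ F) \ S := by
    rw [← hint]; exact inf_sdiff.symm
  have hcore : ((E \ S) ∩ (vertexSet H \ S)).image φ ⊆ qF.core := by
    rw [hinter]
    exact (image_subset_image (subset_inter (sdiff_subset_sdiff inter_subset_right le_rfl)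
      hEFM)).trans hqFcore
  obtain ⟨q, hq, hql, hqcore, hqT⟩ := hstrong qF hqF _ hcore
    (card_image_le.trans ((card_le_card (hinter.subset.trans sdiff_subset)).trans hEF)) _ hlab
    ((vertexSet H \ S).image φ) (card_image_le.trans ((card_le_card sdiff_subset).trans hs))
  obtain ⟨hqce, hqd, hqm⟩ := hP q hq
  obtain ⟨ψ, hψφ, hψ, hψE, hψM⟩ := exists_injOn_extend_flag hinj hqce (hEd.trans hqd.symm)
    (hEm.trans hqm) (hinter.subset.trans hEFM) hqcore hqT
  refine ⟨ψ, ?_, fun E' hE' => ?_⟩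
  · rwa [vertexSet_insert, union_comm, union_sdiff_distrib]
  · rcases mem_insert.1 hE' with rfl | hE'
    · exact ⟨q, hq, hql, hψE, hψM⟩
    · obtain ⟨q', hq', hl, he, hc⟩ := hedges E' hE'
      have hψE' : Set.EqOn ψ φ ↑(E' \ S) :=
        hψφ.mono (coe_subset.2 (sdiff_subset_sdiff (subset_vertexSet hE') le_rfl))
      refine ⟨q', hq', hl, (image_congr hψE').trans he, ?_⟩
      rwa [image_congr (hψE'.mono (coe_subset.2 inter_subset_left))]

lemma IsStrong.exists_isFlagEmbedding [Nonempty β] {d m ℓ s : ℕ} {Q : Finset γ}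
    (hstrong : IsStrong ℓ s Q P) (hne : P.Nonempty)
    (hP : ∀ q ∈ P, q.core ⊆ q.edge ∧ #q.edge = d ∧ m ≤ #q.core) (hH : IsHypertree H)
    (hE : ∀ E ∈ H, #(E \ S) = d ∧ #((E \ S) ∩ M) ≤ m ∧ lab E ∈ Q) (hov : Overlapping ℓ H)
    (hM : ∀ E ∈ H, ∀ F ∈ H, E ≠ F → (E ∩ F) \ S ⊆ M) (hs : #(vertexSet H) ≤ s) :
    ∃ φ, IsFlagEmbedding S M lab P H φ := by
  induction hH with
  | single E =>
    obtain ⟨hEd, hEm, hlab⟩ := hE E (mem_singleton_self E)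
    obtain ⟨q₀, hq₀⟩ := hne
    obtain ⟨q, hq, hql, -⟩ := hstrong q₀ hq₀ ∅ (empty_subset _) (by simp) _ hlab ∅ (by simp)
    obtain ⟨hqce, hqd, hqm⟩ := hP q hq
    obtain ⟨φ, -, hφ, hφE, hφM⟩ := exists_injOn_extend_flag (W := ∅) (U := E \ S) (M := M)
      (φ := fun _ : α => Classical.arbitrary β) (by simp) hqce (hEd.trans hqd.symm)
      (hEm.trans hqm) (by simp) (by simp) (by simp)
    refine ⟨φ, by simpa [vertexSet] using hφ, fun E' hE' => ?_⟩
    obtain rfl := mem_singleton.1 hE'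
    exact ⟨q, hq, hql, hφE, hφM⟩
  | @grow H E F _ hEH hF hint ih =>
    have hF' := mem_insert_of_mem hF (b := E)
    have hne' : E ≠ F := fun h => hEH (h ▸ hF)
    have hs' : #(vertexSet H) ≤ s :=
      (card_le_card (vertexSet_insert E H ▸ subset_union_right)).trans hs
    obtain ⟨φ, hφ⟩ := ih (fun E' h => hE E' (mem_insert_of_mem h))
      (fun E' h F' h' => hov E' (mem_insert_of_mem h) F' (mem_insert_of_mem h'))
      (fun E' h F' h' => hM E' (mem_insert_of_mem h) F' (mem_insert_of_mem h')) hs'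
    obtain ⟨hEd, hEm, hlab⟩ := hE E (mem_insert_self E H)
    exact hφ.exists_insert hstrong hP hF hint hEd hEm hlab
      (hov E (mem_insert_self E H) F hF' hne') (hM E (mem_insert_self E H) F hF' hne') hs'

end TreeEmbedding

section DecisionLists

/-- A rule of a decision list for flags: a flag whose core contains `key` is predicted either not
to carry `label`, or to meet `trap` outside `key`. -/
structure Rule (γ β : Type*) where
  key : Finset β
  label : γ
  trap : Finset β

variable [DecidableEq β]

/-- The rule by which the decision list `w` treats a core `B`: the first one whose key lies
in `B`. -/
noncomputable def firstRule (w : List (Rule γ β)) (B : Finset β) : Option (Rule γ β) :=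
  w.find? fun t => t.key ⊆ B

/-- The decision list `w` makes a correct prediction for the flag `q`. -/
def Catches (w : List (Rule γ β)) (q : LabelledFlag γ β) : Prop :=
  ∃ t, firstRule w q.core = some t ∧ (t.label = q.label → ¬ q.edge ∩ t.trap ⊆ t.key)

/-- The decision lists with distinct small keys and small traps in `V`, and labels in `Q`. -/
def IsDecisionList (V : Finset β) (Q : Finset γ) (ℓ s : ℕ) (w : List (Rule γ β)) : Prop :=
  (w.map Rule.key).Nodup ∧
    ∀ t ∈ w, (t.key ⊆ V ∧ #t.key ≤ ℓ) ∧ t.label ∈ Q ∧ t.trap ⊆ V ∧ #t.trap ≤ s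

/-- The trap vertices outside the key of some rule of `w` that may apply inside `B`. -/
noncomputable def forced (w : List (Rule γ β)) (B : Finset β) : Finset β :=
  {t ∈ w.toFinset | t.key ⊆ B}.biUnion fun t => t.trap \ t.key

lemma firstRule_eq_some {w : List (Rule γ β)} {B : Finset β} {t : Rule γ β}
    (h : firstRule w B = some t) : t ∈ w ∧ t.key ⊆ B :=
  ⟨List.mem_of_find?_eq_some h, by simpa using List.find?_some h⟩

lemma mem_forced {w : List (Rule γ β)} {B : Finset β} {y : β} :
    y ∈ forced w B ↔ ∃ t ∈ w, t.key ⊆ B ∧ y ∈ t.trap ∧ y ∉ t.key := by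
  simp [forced, and_assoc]

lemma forced_mono (w : List (Rule γ β)) : Monotone (forced w) := fun _ _ hBC _ hy => by
  obtain ⟨t, ht, hkey, hy⟩ := mem_forced.1 hy
  exact mem_forced.2 ⟨t, ht, hkey.trans hBC, hy⟩

lemma Catches.exists_mem_forced {w : List (Rule γ β)} {q : LabelledFlag γ β} (h : Catches w q) :
    ∃ t, firstRule w q.core = some t ∧
      (t.label = q.label → ∃ y ∈ q.edge, y ∈ forced w (q.core.erase y)) := by
  obtain ⟨t, ht, hq⟩ := h
  refine ⟨t, ht, fun hl => ?_⟩
  obtain ⟨y, hy, hyk⟩ := not_subset.1 (hq hl)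
  obtain ⟨hye, hyt⟩ := mem_inter.1 hy
  obtain ⟨htw, htk⟩ := firstRule_eq_some ht
  exact ⟨y, hye, mem_forced.2 ⟨t, htw, subset_erase.2 ⟨htk, hyk⟩, hyt, hyk⟩⟩

lemma exists_decisionList_of_forall_not_isStrong {V : Finset β} {Q : Finset γ} {ℓ s : ℕ}
    (P : Finset (LabelledFlag γ β)) (hPV : ∀ q ∈ P, q.core ⊆ V ∧ q.edge ⊆ V)
    (hP : ∀ P' ⊆ P, P'.Nonempty → ¬ IsStrong ℓ s Q (P' : Set (LabelledFlag γ β))) :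
    ∃ w, IsDecisionList V Q ℓ s w ∧ (∀ t ∈ w, ∃ q ∈ P, t.key ⊆ q.core) ∧
      ∀ q ∈ P, Catches w q := by
  induction P using Finset.strongInduction with
  | H P ih =>
    rcases P.eq_empty_or_nonempty with rfl | hne
    · exact ⟨[], by simp [IsDecisionList], by simp, by simp⟩
    obtain ⟨q₀, hq₀, A, hA, hAℓ, x, hx, T, hTs, hT⟩ :
        ∃ q ∈ P, ∃ A ⊆ q.core, #A ≤ ℓ ∧ ∃ x ∈ Q, ∃ T : Finset β, #T ≤ s ∧
          ∀ q' ∈ P, q'.label = x → A ⊆ q'.core → ¬ q'.edge ∩ T ⊆ A := by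
      simpa [IsStrong] using hP P subset_rfl hne
    have hsub : {q ∈ P | ¬ A ⊆ q.core} ⊆ P := filter_subset _ _
    obtain ⟨w, ⟨hnodup, hw⟩, hkey, hcatch⟩ := ih {q ∈ P | ¬ A ⊆ q.core}
      (filter_ssubset.2 ⟨q₀, hq₀, not_not.2 hA⟩) (fun q hq => hPV q (hsub hq))
      (fun P' hP' => hP P' (hP'.trans hsub))
    refine ⟨⟨A, x, T ∩ V⟩ :: w, ⟨?_, ?_⟩, ?_, fun q hq => ?_⟩
    · refine List.nodup_cons.2 ⟨fun hmem => ?_, hnodup⟩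
      obtain ⟨t, ht, rfl⟩ := List.mem_map.1 hmem
      obtain ⟨q, hq, hqt⟩ := hkey t ht
      exact (mem_filter.1 hq).2 hqt
    · exact List.forall_mem_cons.2 ⟨⟨⟨hA.trans (hPV q₀ hq₀).1, hAℓ⟩, hx, inter_subset_right,
        (card_le_card inter_subset_left).trans hTs⟩, hw⟩
    · refine List.forall_mem_cons.2 ⟨⟨q₀, hq₀, hA⟩, fun t ht => ?_⟩
      obtain ⟨q, hq, hqt⟩ := hkey t ht
      exact ⟨q, hsub hq, hqt⟩
    · by_cases hAq : A ⊆ q.core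
      · refine ⟨⟨A, x, T ∩ V⟩, by simp [firstRule, hAq], fun hl hsub => ?_⟩
        refine hT q hq hl.symm hAq (subset_trans (fun y hy => ?_) hsub)
        have := mem_inter.1 hy
        exact mem_inter.2 ⟨this.1, mem_inter.2 ⟨this.2, (hPV q hq).2 this.1⟩⟩
      · obtain ⟨t, ht, h⟩ := hcatch q (mem_filter.2 ⟨hq, hAq⟩)
        exact ⟨t, by simpa [firstRule, hAq] using ht, h⟩

lemma IsDecisionList.card_forced_le {V : Finset β} {Q : Finset γ} {ℓ s : ℕ}
    {w : List (Rule γ β)} (hw : IsDecisionList V Q ℓ s w) (B : Finset β) :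
    #(forced w B) ≤ 2 ^ #B * s := by
  have hinj : Set.InjOn Rule.key {t | t ∈ w} := fun a ha b hb =>
    List.inj_on_of_nodup_map hw.1 ha hb
  have hkeys : #{t ∈ w.toFinset | t.key ⊆ B} ≤ 2 ^ #B := by
    rw [← card_powerset]
    exact card_le_card_of_injOn Rule.key
      (fun t ht => mem_powerset.2 (mem_filter.1 ht).2)
      (hinj.mono fun t ht => List.mem_toFinset.1 (mem_filter.1 ht).1)
  refine (card_biUnion_le_card_mul _ _ s fun t ht => ?_).trans (Nat.mul_le_mul_right s hkeys)
  exact (card_le_card sdiff_subset).trans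
    (hw.2 t (List.mem_toFinset.1 (mem_filter.1 ht).1)).2.2.2

end DecisionLists

section DecisionListCodes

/-- The lists of length at most `m` with entries in `S`. -/
noncomputable def boundedLists (S : Finset ι) : ℕ → Finset (List ι)
  | 0 => {[]}
  | m + 1 => insert [] (image₂ List.cons S (boundedLists S m))

lemma mem_boundedLists {S : Finset ι} {m : ℕ} {w : List ι} :
    w ∈ boundedLists S m ↔ w.length ≤ m ∧ ∀ t ∈ w, t ∈ S := by
  induction m generalizing w with
  | zero => simpa [boundedLists] using fun h t ht => by simp [h] at ht
  | succ m ih => cases w <;> simp [boundedLists, ih, and_left_comm]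

lemma card_boundedLists_le (S : Finset ι) (m : ℕ) : #(boundedLists S m) ≤ (#S + 1) ^ m := by
  induction m with
  | zero => simp [boundedLists]
  | succ m ih =>
    calc #(boundedLists S (m + 1)) ≤ #S * #(boundedLists S m) + 1 :=
          (card_insert_le _ _).trans (Nat.succ_le_succ (card_image₂_le _ _ _))
      _ ≤ #S * (#S + 1) ^ m + (#S + 1) ^ m :=
          Nat.add_le_add (Nat.mul_le_mul_left _ ih) (Nat.one_le_pow _ _ (Nat.succ_pos _))
      _ = (#S + 1) ^ (m + 1) := by ring

lemma card_powerset_filter_card_le (V : Finset β) (r : ℕ) :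
    #{A ∈ V.powerset | #A ≤ r} ≤ (#V + 1) ^ r := by
  have hsub : {A ∈ V.powerset | #A ≤ r} ⊆ (range (r + 1)).biUnion fun i => powersetCard i V :=
    fun A hA => by simpa [mem_powersetCard, Nat.lt_succ_iff, and_comm] using hA
  calc #{A ∈ V.powerset | #A ≤ r} ≤ ∑ i ∈ range (r + 1), (#V).choose i := by
        simpa only [card_powersetCard] using (card_le_card hsub).trans card_biUnion_le
    _ ≤ ∑ i ∈ range (r + 1), #V ^ i * 1 ^ (r - i) * r.choose i := by
        refine sum_le_sum fun i hi => ?_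
        rw [one_pow, mul_one]
        exact (Nat.choose_le_pow _ _).trans (Nat.le_mul_of_pos_right _
          (Nat.choose_pos (Nat.lt_succ_iff.1 (mem_range.1 hi))))
    _ = (#V + 1) ^ r := (add_pow _ _ _).symm

/-- The finite set of decision lists, see `IsDecisionList`; their length is bounded because
their keys are distinct. -/
noncomputable def decisionLists (V : Finset β) (Q : Finset γ) (ℓ s : ℕ) :
    Finset (List (Rule γ β)) :=
  (boundedLists (({A ∈ V.powerset | #A ≤ ℓ} ×ˢ Q ×ˢ {T ∈ V.powerset | #T ≤ s}).image
    fun t => ⟨t.1, t.2.1, t.2.2⟩) ((#V + 1) ^ ℓ)).filter (IsDecisionList V Q ℓ s)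

lemma mem_decisionLists {V : Finset β} {Q : Finset γ} {ℓ s : ℕ} {w : List (Rule γ β)} :
    w ∈ decisionLists V Q ℓ s ↔ IsDecisionList V Q ℓ s w := by
  rw [decisionLists, mem_filter, mem_boundedLists, and_iff_right_iff_imp]
  refine fun hw => ⟨?_, fun t ht => ?_⟩
  · rw [← List.length_map Rule.key, ← List.toFinset_card_of_nodup hw.1]
    refine (card_le_card fun A hA => ?_).trans (card_powerset_filter_card_le V ℓ)
    obtain ⟨t, ht, rfl⟩ := List.mem_map.1 (List.mem_toFinset.1 hA)
    exact mem_filter.2 ⟨mem_powerset.2 (hw.2 t ht).1.1, (hw.2 t ht).1.2⟩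
  · refine mem_image.2 ⟨(t.key, t.label, t.trap), ?_, rfl⟩
    simpa [mem_product] using hw.2 t ht

lemma card_decisionLists_le {V : Finset β} {Q : Finset γ} (hV : V.Nonempty) (hQ : #Q ≤ #V + 1)
    (ℓ s : ℕ) : #(decisionLists V Q ℓ s) ≤ (#V + 1) ^ ((ℓ + s + 2) * (#V + 1) ^ ℓ) := by
  rw [pow_mul]
  refine (card_filter_le _ _).trans ((card_boundedLists_le _ _).trans (Nat.pow_le_pow_left ?_ _))
  calc #(({A ∈ V.powerset | #A ≤ ℓ} ×ˢ Q ×ˢ {T ∈ V.powerset | #T ≤ s}).image _) + 1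
      ≤ (#V + 1) ^ ℓ * ((#V + 1) * (#V + 1) ^ s) + 1 := by
        refine Nat.succ_le_succ (card_image_le.trans ?_)
        rw [card_product, card_product]
        gcongr <;> exact card_powerset_filter_card_le V _
    _ = (#V + 1) ^ (ℓ + s + 1) * 1 + 1 := by ring
    _ ≤ (#V + 1) ^ (ℓ + s + 1) * 1 + (#V + 1) ^ (ℓ + s + 1) * #V :=
        Nat.add_le_add_left (Nat.mul_pos (by positivity) hV.card_pos) _
    _ = (#V + 1) ^ (ℓ + s + 2) := by ring

end DecisionListCodes

section Shadow

open FinsetFamily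

variable [DecidableEq β]

lemma image_erase_of_injOn {f : ι → β} [DecidableEq ι] {E : Finset ι} {a : ι}
    (hf : Set.InjOn f E) (ha : a ∈ E) : (E.erase a).image f = (E.image f).erase (f a) := by
  refine (eq_of_subset_of_card_le (erase_image_subset_image_erase f E a) ?_).symm
  rw [card_erase_of_mem (mem_image_of_mem f ha), card_image_of_injOn hf, ← card_erase_of_mem ha]
  exact card_image_le

lemma choose_le_card_shadow {𝒜 : Finset (Finset β)} {r t : ℕ}
    (h𝒜 : (𝒜 : Set (Finset β)).Sized (r + 1)) (hne : 𝒜.Nonempty)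
    (ht : t.choose (r + 1) ≤ #𝒜) : t.choose r ≤ #(∂ 𝒜) := by
  rcases le_or_gt t r with htr | hrt
  · obtain ⟨E, hE⟩ := hne
    obtain ⟨a, ha⟩ := card_pos.1 ((h𝒜 hE).ge.trans_lt' r.succ_pos)
    calc t.choose r ≤ r.choose r := Nat.choose_le_choose r htr
      _ = 1 := Nat.choose_self r
      _ ≤ #(∂ 𝒜) := card_pos.2 ⟨_, erase_mem_shadow hE ha⟩
  obtain ⟨D, -, hD⟩ := exists_subset_card_eq (n := #(𝒜.biUnion id))
    (s := (univ : Finset (Fin (#(𝒜.biUnion id) + t + 1)))) (by simp [add_assoc])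
  obtain ⟨f, hf, -, -⟩ := exists_injOn_image_eq_of_eqOn (A := ∅) (D := D) (φ := fun _ => 0)
    (empty_subset _) (by simp) (by simp) hD.symm
  have hfE : ∀ E ∈ 𝒜, Set.InjOn f E := fun E hE =>
    hf.mono (coe_subset.2 (subset_biUnion_of_mem id hE))
  have hsized : ∀ E' ∈ 𝒜.image (image f), #E' = r + 1 := fun E' hE' => by
    obtain ⟨E, hE, rfl⟩ := mem_image.1 hE'
    rw [card_image_of_injOn (hfE E hE), h𝒜 hE]
  have hcard : #(𝒜.image (image f)) = #𝒜 := card_image_of_injOn (injOn_image_of_biUnion_injOn hf)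
  have hshadow : ∂ (𝒜.image (image f)) ⊆ (∂ 𝒜).image (image f) := fun B hB => by
    obtain ⟨E', hE', b, hb, rfl⟩ := mem_shadow_iff.1 hB
    obtain ⟨E, hE, rfl⟩ := mem_image.1 hE'
    obtain ⟨a, ha, rfl⟩ := mem_image.1 hb
    exact mem_image.2 ⟨E.erase a, erase_mem_shadow hE ha, image_erase_of_injOn (hfE E hE) ha⟩
  exact (kruskal_katona_lovasz_form (i := 1) (by omega) hrt (by omega) (fun E' hE' => hsized E' hE')
    (ht.trans hcard.ge)).trans ((card_le_card hshadow).trans card_image_le)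

lemma mul_card_le_mul_card_shadow {𝒜 : Finset (Finset β)} {r m : ℕ}
    (h𝒜 : (𝒜 : Set (Finset β)).Sized (r + 1)) (hm : #(∂ 𝒜) < m.choose r) :
    (r + 1) * #𝒜 ≤ m * #(∂ 𝒜) := by
  rcases 𝒜.eq_empty_or_nonempty with rfl | hne
  · simp
  have hsmall : ∃ t : ℕ, #𝒜 < t.choose (r + 1) :=
    ⟨m, not_le.1 fun h => hm.not_ge (choose_le_card_shadow h𝒜 hne h)⟩
  obtain ⟨t, ht, hshadow⟩ : ∃ t, #𝒜 < (t + 1).choose (r + 1) ∧ t.choose r ≤ #(∂ 𝒜) := by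
    obtain ⟨t, ht⟩ := Nat.exists_eq_succ_of_ne_zero (n := Nat.find hsmall) fun h => by
      simpa [h] using Nat.find_spec hsmall
    have hspec := Nat.find_spec hsmall
    rw [ht] at hspec
    exact ⟨t, hspec, choose_le_card_shadow h𝒜 hne
      (not_lt.1 (Nat.find_min hsmall (t.lt_succ_self.trans_eq ht.symm)))⟩
  have htm : t + 1 ≤ m := by
    by_contra h
    exact hm.not_ge ((Nat.choose_le_choose r (Nat.lt_succ_iff.1 (not_le.1 h))).trans hshadow)
  calc (r + 1) * #𝒜 ≤ (r + 1) * (t + 1).choose (r + 1) := Nat.mul_le_mul_left _ ht.le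
    _ = (t + 1) * t.choose r := by rw [Nat.add_one_mul_choose_eq, mul_comm]
    _ ≤ m * #(∂ 𝒜) := Nat.mul_le_mul htm hshadow

end Shadow

section RuledEdges

open FinsetFamily

variable [DecidableEq β]

lemma card_le_of_forall_exists_eq_insert_insert {𝓔 : Finset (Finset β)} {V : Finset β}
    {r a b : ℕ} (f : Finset β → Finset β) (g : Finset β → β → Finset β)
    (hf : ∀ B ∈ powersetCard r V, #(f B) ≤ a)
    (hg : ∀ B ∈ powersetCard r V, ∀ x ∈ f B, #(g B x) ≤ b)
    (h𝓔 : ∀ E ∈ 𝓔, ∃ B ∈ powersetCard r V, ∃ x ∈ f B, ∃ y ∈ g B x, E = insert y (insert x B)) :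
    #𝓔 ≤ #V ^ r * (a * b) := by
  have hsub : 𝓔 ⊆ (powersetCard r V).biUnion fun B => (f B).biUnion fun x =>
      (g B x).image fun y => insert y (insert x B) := fun E hE => by
    obtain ⟨B, hB, x, hx, y, hy, rfl⟩ := h𝓔 E hE
    exact mem_biUnion.2 ⟨B, hB, mem_biUnion.2 ⟨x, hx, mem_image_of_mem _ hy⟩⟩
  refine (card_le_card hsub).trans ((card_biUnion_le_card_mul _ _ (a * b) fun B hB => ?_).trans
    (Nat.mul_le_mul_right _ ?_))
  · exact (card_biUnion_le_card_mul _ _ b fun x hx => card_image_le.trans (hg B hB x hx)).trans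
      (Nat.mul_le_mul_right b (hf B hB))
  · exact (card_powersetCard r V).trans_le (Nat.choose_le_pow _ _)

lemma exists_eq_insert_insert_of_mem_powersetCard {V E : Finset β} {r : ℕ} {x y : β}
    (hE : E ∈ powersetCard (r + 2) V) (hx : x ∈ E) (hy : y ∈ E) (hxy : x ≠ y) :
    (E.erase y).erase x ∈ powersetCard r V ∧ insert x ((E.erase y).erase x) = E.erase y ∧
      insert y (E.erase y) = E := by
  obtain ⟨hEV, hcard⟩ := mem_powersetCard.1 hE
  have hx' : x ∈ E.erase y := mem_erase.2 ⟨hxy, hx⟩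
  refine ⟨mem_powersetCard.2 ⟨(erase_subset _ _).trans ((erase_subset _ _).trans hEV), ?_⟩,
    insert_erase hx', insert_erase hy⟩
  rw [card_erase_of_mem hx', card_erase_of_mem hy, hcard]
  rfl

lemma card_filter_two_le_card_inter_le (V L : Finset β) (r : ℕ) :
    #{E ∈ powersetCard (r + 2) V | 2 ≤ #(E ∩ L)} ≤ #V ^ r * (#L * #L) := by
  refine card_le_of_forall_exists_eq_insert_insert (fun _ => L) (fun _ _ => L)
    (fun _ _ => le_rfl) (fun _ _ _ _ => le_rfl) fun E hE => ?_
  obtain ⟨hE, hEL⟩ := mem_filter.1 hE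
  obtain ⟨x, hx, y, hy, hxy⟩ := one_lt_card.1 hEL
  obtain ⟨hB, hBx, hBy⟩ := exists_eq_insert_insert_of_mem_powersetCard hE
    (mem_inter.1 hx).1 (mem_inter.1 hy).1 hxy
  exact ⟨_, hB, x, (mem_inter.1 hx).2, y, (mem_inter.1 hy).2, by rw [hBx, hBy]⟩

/-- The edge `E` is ruled by `R` if deleting any two vertices of `E` leaves a set on which `R`
forces some vertex of `E`. -/
def IsRuled (R : Finset β → Finset β) (E : Finset β) : Prop :=
  ∀ a ∈ E, ∀ b ∈ E, a ≠ b → ∃ y ∈ E, y ∈ R (((E.erase a).erase b).erase y)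

/-- Two different vertices of `E` are forced by `R`, one of them without using the other. -/
def IsDoublyForced (R : Finset β → Finset β) (E : Finset β) : Prop :=
  ∃ x ∈ E, ∃ y ∈ E, x ≠ y ∧ x ∈ R ((E.erase y).erase x) ∧ y ∈ R (E.erase y)

/-- The vertex `c` is forced by each set obtained from `E` by deleting `c` and another vertex. -/
def IsCenter (R : Finset β → Finset β) (E : Finset β) (c : β) : Prop :=
  c ∈ E ∧ ∀ b ∈ E.erase c, c ∈ R ((E.erase c).erase b)

/-- The `r`-sets in `V` on which `R` forces `c`. -/
noncomputable def forcingSets (R : Finset β → Finset β) (V : Finset β) (r : ℕ) (c : β) :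
    Finset (Finset β) :=
  {B ∈ powersetCard r V | c ∈ R B}

/-- The vertices forced by at least as many `r`-sets as there are in a set of size `m`. -/
noncomputable def heavyVertices (R : Finset β → Finset β) (V : Finset β) (r m : ℕ) : Finset β :=
  {c ∈ V | m.choose r ≤ #(forcingSets R V r c)}

variable {R : Finset β → Finset β} {V : Finset β} {r a : ℕ}

lemma IsRuled.exists_isCenter {E : Finset β} (hE : IsRuled R E) (hR : Monotone R)
    (hcard : 2 ≤ #E) (hdeg : ¬ IsDoublyForced R E) : ∃ c, IsCenter R E c := by
  obtain ⟨a, ha, b, hb, hab⟩ := one_lt_card.1 hcard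
  obtain ⟨c, hc, hcab⟩ := hE a ha b hb hab
  have hcE : c ∈ R (E.erase c) := hR (erase_subset_erase c
    ((erase_subset _ _).trans (erase_subset _ _))) hcab
  refine ⟨c, hc, fun z hz => ?_⟩
  obtain ⟨hzc, hz⟩ := mem_erase.1 hz
  obtain ⟨y, hy, hyz⟩ := hE c hc z hz hzc.symm
  rcases eq_or_ne y c with rfl | hyc
  · exact hR (erase_subset _ _) hyz
  · exact absurd ⟨y, hy, c, hc, hyc, hR (erase_subset_erase y (erase_subset _ _)) hyz, hcE⟩ hdeg

lemma card_filter_isDoublyForced_le (hRa : ∀ B, #B ≤ r + 1 → #(R B) ≤ a) :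
    #{E ∈ powersetCard (r + 2) V | IsDoublyForced R E} ≤ #V ^ r * (a * a) := by
  refine card_le_of_forall_exists_eq_insert_insert R (fun B x => R (insert x B))
    (fun B hB => hRa B ((mem_powersetCard.1 hB).2.trans_le r.le_succ))
    (fun B hB x _ => hRa _ ((card_insert_le x B).trans_eq
      (congrArg (· + 1) (mem_powersetCard.1 hB).2))) fun E hE => ?_
  obtain ⟨hE, x, hx, y, hy, hxy, hxR, hyR⟩ := mem_filter.1 hE
  obtain ⟨hB, hBx, hBy⟩ := exists_eq_insert_insert_of_mem_powersetCard hE hx hy hxy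
  exact ⟨_, hB, x, hxR, y, by rwa [hBx], by rw [hBx, hBy]⟩

lemma sum_card_forcingSets_le (hRa : ∀ B, #B ≤ r + 1 → #(R B) ≤ a) :
    ∑ c ∈ V, #(forcingSets R V r c) ≤ #V ^ r * a := by
  calc ∑ c ∈ V, #(forcingSets R V r c) = ∑ B ∈ powersetCard r V, #{c ∈ V | c ∈ R B} :=
        sum_card_bipartiteAbove_eq_sum_card_bipartiteBelow fun c B => c ∈ R B
    _ ≤ ∑ _B ∈ powersetCard r V, a := sum_le_sum fun B hB =>
        (card_le_card fun c hc => (mem_filter.1 hc).2).trans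
          (hRa B ((mem_powersetCard.1 hB).2.trans_le r.le_succ))
    _ ≤ #V ^ r * a := by
        rw [sum_const, smul_eq_mul, card_powersetCard]
        exact Nat.mul_le_mul_right a (Nat.choose_le_pow _ _)

lemma card_heavyVertices_mul_choose_le (hRa : ∀ B, #B ≤ r + 1 → #(R B) ≤ a) (m : ℕ) :
    #(heavyVertices R V r m) * m.choose r ≤ #V ^ r * a :=
  calc #(heavyVertices R V r m) * m.choose r
      ≤ ∑ c ∈ heavyVertices R V r m, #(forcingSets R V r c) :=
        card_nsmul_le_sum _ _ _ fun _ hc => (mem_filter.1 hc).2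
    _ ≤ ∑ c ∈ V, #(forcingSets R V r c) := sum_le_sum_of_subset (filter_subset _ _)
    _ ≤ #V ^ r * a := sum_card_forcingSets_le hRa

lemma card_filter_isCenter_le {c : β} {m : ℕ} (hc : #(forcingSets R V r c) < m.choose r) :
    #{E ∈ powersetCard (r + 2) V | IsCenter R E c} ≤ m * #(forcingSets R V r c) := by
  set 𝓔 := {E ∈ powersetCard (r + 2) V | IsCenter R E c}
  have hmem : ∀ E ∈ 𝓔, (E ⊆ V ∧ #E = r + 2) ∧ IsCenter R E c := fun E hE => by
    simpa only [𝓔, mem_filter, mem_powersetCard] using hE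
  have hinj : Set.InjOn (fun E => E.erase c) (𝓔 : Set (Finset β)) :=
    (erase_injOn' c).mono fun E hE => (hmem E hE).2.1
  have hsized : ((𝓔.image fun E => E.erase c : Finset (Finset β)) : Set (Finset β)).Sized
      (r + 1) := fun B hB => by
    obtain ⟨E, hE, rfl⟩ := mem_image.1 hB
    rw [card_erase_of_mem (hmem E hE).2.1, (hmem E hE).1.2]
    rfl
  have hshadow : ∂ (𝓔.image fun E => E.erase c) ⊆ forcingSets R V r c := fun B hB => by
    obtain ⟨D, hD, b, hb, rfl⟩ := mem_shadow_iff.1 hB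
    have hDcard := hsized hD
    obtain ⟨E, hE, rfl⟩ := mem_image.1 hD
    refine mem_filter.2 ⟨mem_powersetCard.2 ⟨?_, ?_⟩, (hmem E hE).2.2 b hb⟩
    · exact (erase_subset _ _).trans ((erase_subset _ _).trans (hmem E hE).1.1)
    · rw [card_erase_of_mem hb, hDcard]
      rfl
  calc #𝓔 = #(𝓔.image fun E => E.erase c) := (card_image_of_injOn hinj).symm
    _ ≤ (r + 1) * #(𝓔.image fun E => E.erase c) := Nat.le_mul_of_pos_left _ r.succ_pos
    _ ≤ m * #(∂ (𝓔.image fun E => E.erase c)) :=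
        mul_card_le_mul_card_shadow hsized ((card_le_card hshadow).trans_lt hc)
    _ ≤ m * #(forcingSets R V r c) := Nat.mul_le_mul_left m (card_le_card hshadow)

lemma card_filter_isRuled_le (hR : Monotone R) (hRa : ∀ B, #B ≤ r + 1 → #(R B) ≤ a) (m : ℕ) :
    #{E ∈ powersetCard (r + 2) V | IsRuled R E ∧ #(E ∩ heavyVertices R V r m) ≠ 1} ≤
      #V ^ r * (a * a + m * a + #(heavyVertices R V r m) * #(heavyVertices R V r m)) := by
  set L := heavyVertices R V r m
  have hsub : {E ∈ powersetCard (r + 2) V | IsRuled R E ∧ #(E ∩ L) ≠ 1} ⊆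
      {E ∈ powersetCard (r + 2) V | IsDoublyForced R E} ∪
      (V \ L).biUnion (fun c => {E ∈ powersetCard (r + 2) V | IsCenter R E c}) ∪
      {E ∈ powersetCard (r + 2) V | 2 ≤ #(E ∩ L)} := fun E hE => by
    obtain ⟨hE, hruled, hne⟩ := mem_filter.1 hE
    obtain ⟨hEV, hcard⟩ := mem_powersetCard.1 hE
    by_cases hdeg : IsDoublyForced R E
    · exact mem_union_left _ (mem_union_left _ (mem_filter.2 ⟨hE, hdeg⟩))
    obtain ⟨c, hc⟩ := hruled.exists_isCenter hR (by omega) hdeg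
    by_cases hcL : c ∈ L
    · have : 0 < #(E ∩ L) := card_pos.2 ⟨c, mem_inter.2 ⟨hc.1, hcL⟩⟩
      exact mem_union_right _ (mem_filter.2 ⟨hE, by omega⟩)
    · exact mem_union_left _ (mem_union_right _ (mem_biUnion.2
        ⟨c, mem_sdiff.2 ⟨hEV hc.1, hcL⟩, mem_filter.2 ⟨hE, hc⟩⟩))
  have hlight : #((V \ L).biUnion fun c => {E ∈ powersetCard (r + 2) V | IsCenter R E c}) ≤
      #V ^ r * (m * a) := by
    calc _ ≤ ∑ c ∈ V \ L, m * #(forcingSets R V r c) :=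
          card_biUnion_le.trans <| sum_le_sum fun c hc => card_filter_isCenter_le <|
            not_le.1 fun h => (mem_sdiff.1 hc).2 (mem_filter.2 ⟨(mem_sdiff.1 hc).1, h⟩)
      _ ≤ m * ∑ c ∈ V, #(forcingSets R V r c) := by
          rw [← mul_sum]
          exact Nat.mul_le_mul_left m (sum_le_sum_of_subset sdiff_subset)
      _ ≤ m * (#V ^ r * a) := Nat.mul_le_mul_left m (sum_card_forcingSets_le hRa)
      _ = #V ^ r * (m * a) := Nat.mul_left_comm _ _ _
  refine (card_le_card hsub).trans ((card_union_le _ _).trans ?_)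
  rw [mul_add, mul_add]
  exact Nat.add_le_add ((card_union_le _ _).trans
    (Nat.add_le_add (card_filter_isDoublyForced_le hRa) hlight))
    (card_filter_two_le_card_inter_le V L r)

lemma card_filter_exists_mem_forced_le {R : κ → Finset β → Finset β} {𝒬 : Finset κ}
    (hRa : ∀ Q ∈ 𝒬, ∀ B, #B ≤ r → #(R Q B) ≤ a) (L : Finset β) :
    #{E ∈ powersetCard (r + 2) V | ∃ Q ∈ 𝒬, ∃ x ∈ E ∩ L, ∃ y ∈ E.erase x,
      y ∈ R Q ((E.erase x).erase y)} ≤ #V ^ r * (#𝒬 * a * #L) := by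
  refine card_le_of_forall_exists_eq_insert_insert (fun B => 𝒬.biUnion fun Q => R Q B)
    (fun _ _ => L) (fun B hB => card_biUnion_le_card_mul _ _ a fun Q hQ =>
      hRa Q hQ B (mem_powersetCard.1 hB).2.le) (fun _ _ _ _ => le_rfl) fun E hE => ?_
  obtain ⟨hE, Q, hQ, x, hx, y, hy, hyR⟩ := mem_filter.1 hE
  obtain ⟨hB, hBy, hBx⟩ := exists_eq_insert_insert_of_mem_powersetCard hE (mem_erase.1 hy).2
    (mem_inter.1 hx).1 (mem_erase.1 hy).1
  exact ⟨_, hB, y, mem_biUnion.2 ⟨Q, hQ, hyR⟩, x, (mem_inter.1 hx).2, by rw [hBy, hBx]⟩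

lemma card_le_mul_card_powersetCard_of_verdict {𝓔 : Finset (Finset β)} {L : Finset β} {t : ℕ}
    (verdict : Finset β → Finset β → Option β) (h𝓔V : 𝓔 ⊆ powersetCard (r + 1) V)
    (h𝓔L : ∀ E ∈ 𝓔, (E ∩ L).Nonempty)
    (h𝓔 : ∀ E ∈ 𝓔, ∀ Q ∈ powersetCard (t + 1) L, ∀ x ∈ E ∩ Q,
      ∃ y ∈ Q, y ≠ x ∧ verdict Q (E.erase x) = some y) :
    #𝓔 ≤ t * #(powersetCard r V) := by
  rcases 𝓔.eq_empty_or_nonempty with rfl | ⟨E₀, hE₀⟩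
  · simp
  have : Nonempty β := ⟨(h𝓔L E₀ hE₀).choose⟩
  choose! x hx using h𝓔L
  have hxE : ∀ E ∈ 𝓔, x E ∈ E := fun E hE => (mem_inter.1 (hx E hE)).1
  refine card_le_mul_card_image_of_maps_to (f := fun E => E.erase (x E)) (fun E hE => ?_) t
    fun D _ => not_lt.1 fun hlt => ?_
  · obtain ⟨hEV, hcard⟩ := mem_powersetCard.1 (h𝓔V hE)
    refine mem_powersetCard.2 ⟨(erase_subset _ _).trans hEV, ?_⟩
    rw [card_erase_of_mem (hxE E hE), hcard]
    rfl
  have hfibre : ∀ E ∈ 𝓔.filter (fun E => E.erase (x E) = D), E ∈ 𝓔 ∧ E.erase (x E) = D :=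
    fun E hE => mem_filter.1 hE
  have hinj : Set.InjOn x (𝓔.filter fun E => E.erase (x E) = D : Finset (Finset β)) :=
    fun E hE F hF hEF => by
      obtain ⟨hE, hED⟩ := hfibre E hE
      obtain ⟨hF, hFD⟩ := hfibre F hF
      rw [← insert_erase (hxE E hE), ← insert_erase (hxE F hF), hED, hFD, hEF]
  obtain ⟨Q, hQsub, hQ⟩ := exists_subset_card_eq ((Nat.succ_le_of_lt hlt).trans_eq
    (card_image_of_injOn hinj).symm)
  have hwitness : ∀ z ∈ Q, ∃ y ∈ Q, y ≠ z ∧ verdict Q D = some y := fun z hz => by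
    obtain ⟨E, hE, rfl⟩ := mem_image.1 (hQsub hz)
    obtain ⟨hE𝓔, hED⟩ := hfibre E hE
    rw [← hED]
    refine h𝓔 E hE𝓔 Q (mem_powersetCard.2 ⟨fun y hy => ?_, hQ⟩) _ (mem_inter.2 ⟨hxE E hE𝓔, hz⟩)
    obtain ⟨F, hF, rfl⟩ := mem_image.1 (hQsub hy)
    exact (mem_inter.1 (hx F (hfibre F hF).1)).2
  obtain ⟨z, hz⟩ := card_pos.1 (hQ.trans_gt t.succ_pos)
  obtain ⟨y, hy, -, hDy⟩ := hwitness z hz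
  obtain ⟨y', -, hne, hDy'⟩ := hwitness y hy
  exact hne (Option.some_injective _ (hDy'.symm.trans hDy))

end RuledEdges

section HFreeFamilies

variable [DecidableEq α] {H : Finset (Finset α)} {F : Finset (Finset ℕ)} {V : Finset ℕ} {r ℓ : ℕ}

lemma not_hFree_of_injOn {φ : α → ℕ} (hφ : Set.InjOn φ ↑(vertexSet H))
    (hF : ∀ E ∈ H, E.image φ ∈ F) : ¬ HFree H F :=
  fun h => h _ (image_subset_iff.2 hF) ⟨φ, hφ, rfl⟩

lemma vdeg_ne_one_of_mem_inter {E E' : Finset α} (hE : E ∈ H) (hE' : E' ∈ H) (hne : E ≠ E')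
    {v : α} (hv : v ∈ E ∩ E') : vdeg H v ≠ 1 := by
  obtain ⟨hvE, hvE'⟩ := mem_inter.1 hv
  exact (one_lt_card.2 ⟨E, mem_filter.2 ⟨hE, hvE⟩, E', mem_filter.2 ⟨hE', hvE'⟩, hne⟩).ne'

lemma TwoContractible.card_inter_filter_vdeg_ne_one_le (h2 : TwoContractible H) {E : Finset α}
    (hE : E ∈ H) (hcard : #E = r + 2) : #(E ∩ {v ∈ vertexSet H | vdeg H v ≠ 1}) ≤ r := by
  have hsplit := card_filter_add_card_filter_not (s := E) fun v => vdeg H v = 1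
  have hsub : E ∩ {v ∈ vertexSet H | vdeg H v ≠ 1} ⊆ {v ∈ E | ¬ vdeg H v = 1} := fun v hv =>
    mem_filter.2 ⟨(mem_inter.1 hv).1, (mem_filter.1 (mem_inter.1 hv).2).2⟩
  have h2E := h2 E hE
  have := card_le_card hsub
  omega

lemma HFree.not_isStrong_of_twoContractible (hF : HFree H F) (hH : IsKTree (r + 2) H)
    (h2 : TwoContractible H) (hov : Overlapping ℓ H) {P : Set (LabelledFlag Unit ℕ)}
    (hne : P.Nonempty)
    (hP : ∀ q ∈ P, q.edge ∈ F ∧ #q.edge = r + 2 ∧ q.core ⊆ q.edge ∧ #q.core = r) :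
    ¬ IsStrong ℓ #(vertexSet H) {()} P := fun hstrong => by
  obtain ⟨φ, hφ, hedges⟩ := hstrong.exists_isFlagEmbedding (S := ∅) (lab := fun _ => ())
    (M := {v ∈ vertexSet H | vdeg H v ≠ 1}) hne
    (fun q hq => ⟨(hP q hq).2.2.1, (hP q hq).2.1, (hP q hq).2.2.2.ge⟩) hH.1
    (fun E hE => by
      rw [sdiff_empty]
      exact ⟨hH.2 E hE, h2.card_inter_filter_vdeg_ne_one_le hE (hH.2 E hE), mem_singleton_self _⟩)
    hov (fun E hE E' hE' hEE' v hv => by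
      rw [sdiff_empty] at hv
      exact mem_filter.2 ⟨subset_vertexSet hE (mem_inter.1 hv).1,
        vdeg_ne_one_of_mem_inter hE hE' hEE' hv⟩) le_rfl
  refine not_hFree_of_injOn (by simpa using hφ) (fun E hE => ?_) hF
  obtain ⟨q, hq, -, hqE, -⟩ := hedges E hE
  rw [sdiff_empty] at hqE
  exact hqE ▸ (hP q hq).1

lemma HFree.exists_decisionList_isRuled (hF : HFree H F) (hH : IsKTree (r + 2) H)
    (h2 : TwoContractible H) (hov : Overlapping ℓ H) (hFV : F ⊆ powersetCard (r + 2) V) :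
    ∃ w ∈ decisionLists V {()} ℓ #(vertexSet H), ∀ E ∈ F, IsRuled (forced w) E := by
  have hFV' : ∀ E ∈ F, E ⊆ V ∧ #E = r + 2 := fun E hE => mem_powersetCard.1 (hFV hE)
  set P : Finset (LabelledFlag Unit ℕ) :=
    F.biUnion fun E => (powersetCard r E).image fun B => ⟨(), E, B⟩
  have hP : ∀ q ∈ P, q.edge ∈ F ∧ q.core ⊆ q.edge ∧ #q.core = r := fun q hq => by
    obtain ⟨E, hE, hq⟩ := mem_biUnion.1 hq
    obtain ⟨B, hB, rfl⟩ := mem_image.1 hq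
    exact ⟨hE, mem_powersetCard.1 hB⟩
  obtain ⟨w, hw, -, hcatch⟩ := exists_decisionList_of_forall_not_isStrong (V := V) P
    (fun q hq => ⟨(hP q hq).2.1.trans (hFV' _ (hP q hq).1).1, (hFV' _ (hP q hq).1).1⟩)
    fun P' hP' hne => hF.not_isStrong_of_twoContractible hH h2 hov (by exact_mod_cast hne)
      fun q hq => ⟨(hP q (hP' hq)).1, (hFV' _ (hP q (hP' hq)).1).2, (hP q (hP' hq)).2⟩
  refine ⟨w, mem_decisionLists.2 hw, fun E hE a ha b hb hab => ?_⟩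
  have hB : (E.erase a).erase b ∈ powersetCard r E := mem_powersetCard.2
    ⟨(erase_subset _ _).trans (erase_subset _ _), by
      rw [card_erase_of_mem (mem_erase.2 ⟨hab.symm, hb⟩), card_erase_of_mem ha, (hFV' E hE).2]
      rfl⟩
  obtain ⟨t, -, ht⟩ :=
    (hcatch ⟨(), E, _⟩ (mem_biUnion.2 ⟨E, hE, mem_image_of_mem _ hB⟩)).exists_mem_forced
  exact ht rfl

lemma IsCrosscut.card_sdiff {S E : Finset α} (hS : IsCrosscut H S) (hE : E ∈ H)
    (hcard : #E = r + 1) : #(E \ S) = r := by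
  have := card_sdiff_add_card_inter E S
  rw [hS E hE, hcard] at this
  omega

lemma IsFlagEmbedding.exists_injOn_image_eq_insert {S M : Finset α} {lab : Finset α → ℕ}
    {P : Set (LabelledFlag ℕ ℕ)} {φ ψ : α → ℕ} (hφ : IsFlagEmbedding S M lab P H φ)
    (hψ : Set.InjOn ψ S) (hP : ∀ q ∈ P, Disjoint q.edge (S.image ψ))
    (hlab : ∀ E ∈ H, (E ∩ S).image ψ = {lab E}) :
    ∃ χ, Set.InjOn χ ↑(vertexSet H) ∧ ∀ E ∈ H, ∃ q ∈ P, E.image χ = insert q.label q.edge := by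
  obtain ⟨hφ, hedges⟩ := hφ
  have hdisj : Disjoint (S.image ψ) ((vertexSet H \ S).image φ) := disjoint_right.2 fun y hy => by
    obtain ⟨v, hv, rfl⟩ := mem_image.1 hy
    obtain ⟨hvH, hvS⟩ := mem_sdiff.1 hv
    obtain ⟨E, hE, hvE⟩ := Finset.mem_sup.1 hvH
    obtain ⟨q, hq, -, hqE, -⟩ := hedges E hE
    exact disjoint_left.1 (hP q hq) (hqE ▸ mem_image_of_mem φ (mem_sdiff.2 ⟨hvE, hvS⟩))
  obtain ⟨χ, hχφ, hχψ, hχ⟩ := exists_injOn_union_image_eq hφ hψ rfl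
    (by simp [inter_sdiff_self]) (by simp [disjoint_iff_inter_eq_empty.1 hdisj])
  refine ⟨χ, hχ.mono fun v hv => ?_, fun E hE => ?_⟩
  · by_cases hvS : v ∈ S <;> simp_all
  obtain ⟨q, hq, hql, hqE, -⟩ := hedges E hE
  refine ⟨q, hq, ?_⟩
  calc E.image χ = (E \ S).image χ ∪ (E ∩ S).image χ := by
        rw [← image_union, sdiff_union_inter]
    _ = (E \ S).image φ ∪ (E ∩ S).image ψ := by
        rw [image_congr (hχφ.mono (coe_subset.2 (sdiff_subset_sdiff (subset_vertexSet hE) le_rfl))),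
          image_congr (hχψ.mono (coe_subset.2 inter_subset_right))]
    _ = insert q.label q.edge := by
        rw [hqE, hlab E hE, hql, union_comm]
        rfl

lemma HFree.not_isStrong_of_isCrosscut (hF : HFree H F) (hH : IsKTree (r + 1) H)
    (hov : Overlapping ℓ H) {S : Finset α} (hS : IsCrosscut H S) {Q : Finset ℕ} (hSQ : #S = #Q)
    {P : Set (LabelledFlag ℕ ℕ)} (hne : P.Nonempty)
    (hP : ∀ q ∈ P, insert q.label q.edge ∈ F ∧ #q.edge = r ∧ q.core = q.edge ∧
      Disjoint q.edge Q) : ¬ IsStrong ℓ #(vertexSet H) Q P := fun hstrong => by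
  obtain ⟨ψ, hψ, hψQ, -⟩ := exists_injOn_image_eq_of_eqOn (A := ∅) (U := S) (D := Q)
    (φ := fun _ => 0) (empty_subset S) (by simp) (by simp) hSQ
  have hlab : ∀ E ∈ H, (E ∩ S).image ψ = {∑ v ∈ E ∩ S, ψ v} := fun E hE => by
    obtain ⟨v, hv⟩ := card_eq_one.1 (hS E hE)
    simp [hv]
  have hcard : ∀ E ∈ H, #(E \ S) = r := fun E hE => hS.card_sdiff hE (hH.2 E hE)
  obtain ⟨φ, hφ⟩ := hstrong.exists_isFlagEmbedding (S := S) (M := vertexSet H)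
    (lab := fun E => ∑ v ∈ E ∩ S, ψ v) hne
    (fun q hq => ⟨(hP q hq).2.2.1.subset, (hP q hq).2.1,
      ((congrArg card (hP q hq).2.2.1).trans (hP q hq).2.1).ge⟩) hH.1
    (fun E hE => ⟨hcard E hE, (card_le_card inter_subset_left).trans (hcard E hE).le,
      hψQ ▸ image_subset_image inter_subset_right (hlab E hE ▸ mem_singleton_self _)⟩)
    hov (fun E hE _ _ _ =>
      sdiff_subset.trans (inter_subset_left.trans (subset_vertexSet hE))) le_rfl
  obtain ⟨χ, hχ, hχE⟩ := hφ.exists_injOn_image_eq_insert hψ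
    (fun q hq => hψQ ▸ (hP q hq).2.2.2) hlab
  refine not_hFree_of_injOn hχ (fun E hE => ?_) hF
  obtain ⟨q, hq, hEq⟩ := hχE E hE
  exact hEq ▸ (hP q hq).1

lemma HFree.exists_decisionList_of_isCrosscut (hF : HFree H F) (hH : IsKTree (r + 1) H)
    (hov : Overlapping ℓ H) {S : Finset α} (hS : IsCrosscut H S) {Q : Finset ℕ} (hSQ : #S = #Q)
    (hFV : F ⊆ powersetCard (r + 1) V) :
    ∃ w ∈ decisionLists V Q ℓ #(vertexSet H), ∀ E ∈ F, ∀ x, E ∩ Q = {x} →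
      Catches w ⟨x, E.erase x, E.erase x⟩ := by
  have hFV' : ∀ E ∈ F, E ⊆ V ∧ #E = r + 1 := fun E hE => mem_powersetCard.1 (hFV hE)
  set P : Finset (LabelledFlag ℕ ℕ) :=
    ((F ×ˢ Q).filter fun e => e.1 ∩ Q = {e.2}).image fun e =>
      ⟨e.2, e.1.erase e.2, e.1.erase e.2⟩
  have hmem : ∀ E ∈ F, ∀ x, E ∩ Q = {x} → x ∈ E ∧ x ∈ Q := fun E _ x hx =>
    mem_inter.1 (hx ▸ mem_singleton_self x)
  have hP : ∀ q ∈ P, insert q.label q.edge ∈ F ∧ #q.edge = r ∧ q.core = q.edge ∧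
      Disjoint q.edge Q := fun q hq => by
    obtain ⟨⟨E, x⟩, hEx, rfl⟩ := mem_image.1 hq
    obtain ⟨hE, hx⟩ := mem_filter.1 hEx
    have hEF := (mem_product.1 hE).1
    have hxE := (hmem E hEF x hx).1
    refine ⟨(insert_erase hxE).symm ▸ hEF, ?_, rfl, disjoint_left.2 fun y hy hyQ => ?_⟩
    · rw [card_erase_of_mem hxE, (hFV' E hEF).2]
      rfl
    · exact (mem_erase.1 hy).1 (mem_singleton.1 (hx ▸ mem_inter.2 ⟨(mem_erase.1 hy).2, hyQ⟩))
  have hPV : ∀ q ∈ P, q.edge ⊆ V := fun q hq =>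
    (subset_insert _ _).trans (hFV' _ (hP q hq).1).1
  obtain ⟨w, hw, -, hcatch⟩ := exists_decisionList_of_forall_not_isStrong (V := V) P
    (fun q hq => ⟨(hP q hq).2.2.1.subset.trans (hPV q hq), hPV q hq⟩)
    fun P' hP' hne => hF.not_isStrong_of_isCrosscut hH hov hS hSQ (by exact_mod_cast hne)
      fun q hq => hP q (hP' hq)
  exact ⟨w, mem_decisionLists.2 hw, fun E hE x hx => hcatch _ <| mem_image.2
    ⟨(E, x), mem_filter.2 ⟨mem_product.2 ⟨hE, (hmem E hE x hx).2⟩, hx⟩, rfl⟩⟩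

end HFreeFamilies

section Containers

/-- The edges compatible with the two kinds of predictions that hold for an `H`-free family: those
of `w` about the edges themselves, and those of the lists `W Q`, one for each `σ`-set `Q` of heavy
vertices, about which vertex of `Q` lies in an edge. -/
noncomputable def container (V : Finset ℕ) (r m σ : ℕ) (w : List (Rule Unit ℕ))
    (W : Finset ℕ → List (Rule ℕ ℕ)) : Finset (Finset ℕ) :=
  {E ∈ powersetCard (r + 2) V | IsRuled (forced w) E ∧
    (#(E ∩ heavyVertices (forced w) V r m) = 1 →
      ∀ Q ∈ powersetCard σ (heavyVertices (forced w) V r m), ∀ x ∈ E ∩ Q,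
        Catches (W Q) ⟨x, E.erase x, E.erase x⟩)}

/-- All containers obtained from decision lists in `V` with traps of size at most `s`. -/
noncomputable def containers (V : Finset ℕ) (r m σ ℓ s : ℕ) : Finset (Finset (Finset ℕ)) :=
  (decisionLists V {()} ℓ s).biUnion fun w =>
    ((powersetCard σ (heavyVertices (forced w) V r m)).pi fun Q => decisionLists V Q ℓ s).image
      fun W => container V r m σ w fun Q =>
        if hQ : Q ∈ powersetCard σ (heavyVertices (forced w) V r m) then W Q hQ else []

variable {V : Finset ℕ} {r m σ t ℓ s b n : ℕ}

lemma mem_containers {C : Finset (Finset ℕ)} :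
    C ∈ containers V r m σ ℓ s ↔ ∃ w ∈ decisionLists V {()} ℓ s, ∃ W : Finset ℕ → List (Rule ℕ ℕ),
      (∀ Q ∈ powersetCard σ (heavyVertices (forced w) V r m), W Q ∈ decisionLists V Q ℓ s) ∧
        container V r m σ w W = C := by
  simp only [containers, mem_biUnion, mem_image, Finset.mem_pi]
  refine exists_congr fun w => and_congr_right fun _ => ⟨?_, ?_⟩
  · rintro ⟨W, hW, rfl⟩
    exact ⟨_, fun Q hQ => by simpa only [dif_pos hQ] using hW Q hQ, rfl⟩
  · rintro ⟨W, hW, rfl⟩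
    refine ⟨fun Q _ => W Q, hW, filter_congr fun E _ => and_congr_right fun _ =>
      imp_congr_right fun _ => forall₂_congr fun Q hQ => ?_⟩
    simp only [dif_pos hQ]

lemma card_containers_le (hV : V.Nonempty)
    (hb : ∀ w ∈ decisionLists V {()} ℓ s, #(heavyVertices (forced w) V r m) ≤ b) :
    #(containers V r m σ ℓ s) ≤ (#V + 1) ^ ((ℓ + s + 2) * (2 ^ b + 1) * (#V + 1) ^ ℓ) := by
  set N := (#V + 1) ^ ((ℓ + s + 2) * (#V + 1) ^ ℓ) with hN
  calc #(containers V r m σ ℓ s) ≤ #(decisionLists V {()} ℓ s) * N ^ 2 ^ b := by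
        refine card_biUnion_le_card_mul _ _ _ fun w hw => card_image_le.trans ?_
        rw [card_pi]
        refine (prod_le_pow_card _ _ N fun Q hQ => card_decisionLists_le hV ?_ ℓ s).trans
          (Nat.pow_le_pow_right (Nat.one_le_pow _ _ (Nat.succ_pos _)) ?_)
        · exact (card_le_card ((mem_powersetCard.1 hQ).1.trans (filter_subset _ _))).trans
            (Nat.le_succ _)
        · rw [card_powersetCard]
          exact (Nat.choose_le_two_pow _ _).trans (Nat.pow_le_pow_right two_pos (hb w hw))
    _ ≤ N * N ^ 2 ^ b := Nat.mul_le_mul_right _ (card_decisionLists_le hV (by simp) ℓ s)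
    _ = (#V + 1) ^ ((ℓ + s + 2) * (2 ^ b + 1) * (#V + 1) ^ ℓ) := by
        rw [← pow_succ', hN, ← pow_mul]
        ring

lemma card_forced_le_of_mem_decisionLists {w : List (Rule γ ℕ)} {Q : Finset γ}
    (hw : w ∈ decisionLists V Q ℓ s) {B : Finset ℕ} (hB : #B ≤ r) :
    #(forced w B) ≤ 2 ^ r * s :=
  ((mem_decisionLists.1 hw).card_forced_le B).trans
    (Nat.mul_le_mul_right s (Nat.pow_le_pow_right two_pos hB))

lemma card_filter_catches_le {L : Finset ℕ} {W : Finset ℕ → List (Rule ℕ ℕ)}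
    (hW : ∀ Q ∈ powersetCard (t + 1) L, W Q ∈ decisionLists V Q ℓ s) :
    #{E ∈ powersetCard (r + 1) V | #(E ∩ L) = 1 ∧ ∀ Q ∈ powersetCard (t + 1) L, ∀ x ∈ E ∩ Q,
      Catches (W Q) ⟨x, E.erase x, E.erase x⟩ ∧
        ∀ y ∈ E.erase x, y ∉ forced (W Q) ((E.erase x).erase y)} ≤ t * (#V).choose r := by
  rw [← card_powersetCard]
  refine card_le_mul_card_powersetCard_of_verdict (L := L)
    (fun Q B => (firstRule (W Q) B).map Rule.label) (filter_subset _ _)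
    (fun E hE => card_pos.1 (by rw [(mem_filter.1 hE).2.1]; exact one_pos))
    fun E hE Q hQ x hx => ?_
  obtain ⟨hcatch, hfree⟩ := (mem_filter.1 hE).2.2 Q hQ x hx
  obtain ⟨u, hu, hux⟩ := hcatch.exists_mem_forced
  refine ⟨u.label, ((mem_decisionLists.1 (hW Q hQ)).2 u (firstRule_eq_some hu).1).2.1,
    fun h => ?_, by simp only [hu, Option.map_some]⟩
  obtain ⟨y, hy, hyW⟩ := hux h
  exact hfree y hy hyW

lemma card_container_le {a : ℕ} {w : List (Rule Unit ℕ)} {W : Finset ℕ → List (Rule ℕ ℕ)}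
    (hw : w ∈ decisionLists V {()} ℓ s) (hb : #(heavyVertices (forced w) V r m) ≤ b)
    (hW : ∀ Q ∈ powersetCard (t + 1) (heavyVertices (forced w) V r m),
      W Q ∈ decisionLists V Q ℓ s) (ha : 2 ^ (r + 1) * s ≤ a) :
    #(container V r m (t + 1) w W) ≤
      #V ^ r * (a * a + b * b + 2 ^ b * a * b + m * a) + t * (#V).choose (r + 1) := by
  set L := heavyVertices (forced w) V r m
  have hsub : container V r m (t + 1) w W ⊆
      {E ∈ powersetCard (r + 2) V | IsRuled (forced w) E ∧ #(E ∩ L) ≠ 1} ∪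
      {E ∈ powersetCard (r + 2) V | ∃ Q ∈ powersetCard (t + 1) L, ∃ x ∈ E ∩ L, ∃ y ∈ E.erase x,
        y ∈ forced (W Q) ((E.erase x).erase y)} ∪
      {E ∈ powersetCard (r + 2) V | #(E ∩ L) = 1 ∧ ∀ Q ∈ powersetCard (t + 1) L, ∀ x ∈ E ∩ Q,
        Catches (W Q) ⟨x, E.erase x, E.erase x⟩ ∧
          ∀ y ∈ E.erase x, y ∉ forced (W Q) ((E.erase x).erase y)} := fun E hE => by
    obtain ⟨hEV, hruled, hcatch⟩ := mem_filter.1 hE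
    simp only [mem_union, mem_filter, or_assoc]
    by_cases hEL : #(E ∩ L) = 1
    · refine .inr (or_iff_not_imp_left.2 fun hnot => ⟨hEV, hEL, fun Q hQ x hx =>
        ⟨hcatch hEL Q hQ x hx, fun y hy hyW => hnot ⟨hEV, Q, hQ, x, ?_, y, hy, hyW⟩⟩⟩)
      exact inter_subset_inter_left (mem_powersetCard.1 hQ).1 hx
    · exact .inl ⟨hEV, hruled, hEL⟩
  have hruled := card_filter_isRuled_le (V := V) (forced_mono w)
    (fun B hB => (card_forced_le_of_mem_decisionLists hw hB).trans ha) m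
  have hforced := card_filter_exists_mem_forced_le (V := V) (R := fun Q => forced (W Q))
    (fun Q hQ B (hB : #B ≤ r) =>
      (card_forced_le_of_mem_decisionLists (hW Q hQ) (hB.trans r.le_succ)).trans ha) L
  rw [card_powersetCard] at hforced
  have hchoose : (#L).choose (t + 1) ≤ 2 ^ b :=
    (Nat.choose_le_two_pow _ _).trans (Nat.pow_le_pow_right two_pos hb)
  calc #(container V r m (t + 1) w W)
      ≤ #V ^ r * (a * a + m * a + #L * #L) + #V ^ r * ((#L).choose (t + 1) * a * #L) +
        t * (#V).choose (r + 1) := (card_le_card hsub).trans <| (card_union_le _ _).trans <|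
          Nat.add_le_add ((card_union_le _ _).trans (Nat.add_le_add hruled hforced))
            (card_filter_catches_le hW)
    _ ≤ #V ^ r * (a * a + m * a + b * b) + #V ^ r * (2 ^ b * a * b) +
        t * (#V).choose (r + 1) := by gcongr
    _ = _ := by ring

lemma HFree.exists_subset_container [DecidableEq α] {H : Finset (Finset α)}
    {F : Finset (Finset ℕ)} (hF : HFree H F) (hH : IsKTree (r + 2) H) (h2 : TwoContractible H)
    (hov : Overlapping ℓ H) {S : Finset α} (hS : IsCrosscut H S)
    (hFV : F ⊆ powersetCard (r + 2) V) (m : ℕ) :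
    ∃ C ∈ containers V r m #S ℓ #(vertexSet H), F ⊆ C := by
  obtain ⟨w, hw, hruled⟩ := hF.exists_decisionList_isRuled hH h2 hov hFV
  set L := heavyVertices (forced w) V r m
  have hlists : ∀ Q ∈ powersetCard #S L, ∃ u ∈ decisionLists V Q ℓ #(vertexSet H),
      ∀ E ∈ F, ∀ x, E ∩ Q = {x} → Catches u ⟨x, E.erase x, E.erase x⟩ := fun Q hQ =>
    hF.exists_decisionList_of_isCrosscut hH hov hS (mem_powersetCard.1 hQ).2.symm hFV
  choose! W hW hcatch using hlists
  refine ⟨_, mem_containers.2 ⟨w, hw, W, hW, rfl⟩, fun E hE => mem_filter.2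
    ⟨hFV hE, hruled E hE, fun hEL Q hQ x hx => hcatch Q hQ E hE x ?_⟩⟩
  refine eq_singleton_iff_unique_mem.2 ⟨hx, fun y hy => card_le_one.1 hEL.le y ?_ x ?_⟩
  · exact inter_subset_inter_left (mem_powersetCard.1 hQ).1 hy
  · exact inter_subset_inter_left (mem_powersetCard.1 hQ).1 hx

lemma pow_le_mul_choose_div {q : ℕ} (hq : 0 < q) (hn : 2 * q * r ≤ n) :
    n ^ r ≤ (2 * q) ^ r * r.factorial * (n / q).choose r := by
  have hr : 2 * r ≤ n / q := (Nat.le_div_iff_mul_le hq).2 (by linarith)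
  have hlt : n ≤ q * (n / q + 1) := (Nat.lt_mul_div_succ n hq).le
  calc n ^ r ≤ (2 * q * (n / q + 1 - r)) ^ r := by
        refine Nat.pow_le_pow_left (hlt.trans ?_) r
        rw [mul_comm 2 q, mul_assoc]
        exact Nat.mul_le_mul_left q (by omega)
    _ ≤ (2 * q) ^ r * (n / q).descFactorial r := by
        rw [mul_pow]
        exact Nat.mul_le_mul_left _ (Nat.pow_sub_le_descFactorial _ _)
    _ = (2 * q) ^ r * r.factorial * (n / q).choose r := by
        rw [Nat.descFactorial_eq_factorial_mul_choose, mul_assoc]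

lemma card_heavyVertices_le {w : List (Rule Unit ℕ)} (hw : w ∈ decisionLists V {()} ℓ s) {q : ℕ}
    (hq : 0 < q) (hV : 2 * q * r ≤ #V) :
    #(heavyVertices (forced w) V r (#V / q)) ≤ (2 * q) ^ r * r.factorial * (2 ^ (r + 1) * s) := by
  have hr : r ≤ #V / q := (Nat.le_div_iff_mul_le hq).2 (by linarith)
  refine Nat.le_of_mul_le_mul_right ?_ (Nat.choose_pos hr)
  calc _ ≤ #V ^ r * (2 ^ (r + 1) * s) := card_heavyVertices_mul_choose_le
        (fun B hB => card_forced_le_of_mem_decisionLists hw hB) _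
    _ ≤ (2 * q) ^ r * r.factorial * (#V / q).choose r * (2 ^ (r + 1) * s) :=
        Nat.mul_le_mul_right _ (pow_le_mul_choose_div hq hV)
    _ = _ := by ring

lemma exists_eventually_pow_le_mul_choose (r : ℕ) :
    ∃ c : ℝ, 0 < c ∧ ∀ᶠ n : ℕ in atTop, (n : ℝ) ^ r ≤ c * n.choose r := by
  refine ⟨2 ^ r * r.factorial, by positivity, ?_⟩
  filter_upwards [eventually_ge_atTop (2 * r)] with n hn
  have := pow_le_mul_choose_div (n := n) (r := r) one_pos (by linarith)
  rw [Nat.div_one, mul_one] at this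
  exact_mod_cast this

lemma eventually_mul_pow_le_mul_choose (A : ℝ) (r : ℕ) {δ : ℝ} (hδ : 0 < δ) :
    ∀ᶠ n : ℕ in atTop, A * (n : ℝ) ^ r ≤ δ * n.choose (r + 1) := by
  obtain ⟨c, hc, hpow⟩ := exists_eventually_pow_le_mul_choose (r + 1)
  filter_upwards [hpow, tendsto_natCast_atTop_atTop.eventually_ge_atTop (A * c / δ)] with n hpow hn
  refine le_of_mul_le_mul_left ?_ hc
  calc c * (A * (n : ℝ) ^ r) = A * c * (n : ℝ) ^ r := by ring
    _ ≤ n * δ * (n : ℝ) ^ r := mul_le_mul_of_nonneg_right ((div_le_iff₀ hδ).1 hn) (by positivity)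
    _ = δ * (n : ℝ) ^ (r + 1) := by ring
    _ ≤ δ * (c * n.choose (r + 1)) := mul_le_mul_of_nonneg_left hpow hδ.le
    _ = c * (δ * n.choose (r + 1)) := by ring

lemma exists_eventually_pow_mul_le_mul_choose (A : ℕ → ℕ) (a r : ℕ) {δ : ℝ} (hδ : 0 < δ) :
    ∃ q, 0 < q ∧ ∀ᶠ n : ℕ in atTop,
      (n : ℝ) ^ r * (A q + (n / q : ℕ) * a) ≤ δ * n.choose (r + 1) := by
  obtain ⟨c, hc, hpow⟩ := exists_eventually_pow_le_mul_choose (r + 1)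
  obtain ⟨q, hq⟩ := exists_nat_gt (2 * (a * c) / δ)
  have hq0 : (0 : ℝ) < q := lt_of_le_of_lt (by positivity) hq
  have hacq : a * c / q ≤ δ / 2 := by
    rw [div_le_iff₀ hq0]
    linarith [(div_lt_iff₀ hδ).1 hq]
  refine ⟨q, Nat.cast_pos.1 hq0, ?_⟩
  filter_upwards [hpow, eventually_mul_pow_le_mul_choose (A q) r (half_pos hδ)] with n hpow hA
  have hdiv : (n : ℝ) ^ r * ((n / q : ℕ) * a) ≤ δ / 2 * n.choose (r + 1) := by
    calc (n : ℝ) ^ r * ((n / q : ℕ) * a) ≤ (n : ℝ) ^ r * (n / q * a) := by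
          gcongr
          exact Nat.cast_div_le
      _ = a / q * (n : ℝ) ^ (r + 1) := by ring
      _ ≤ a / q * (c * n.choose (r + 1)) := by gcongr
      _ = a * c / q * n.choose (r + 1) := by ring
      _ ≤ δ / 2 * n.choose (r + 1) := by gcongr
  linarith

lemma card_vtx (n : ℕ) : #(vtx n) = n := by simp [vtx]

theorem exists_containers [DecidableEq α] {H : Finset (Finset α)} (hH : IsKTree (r + 2) H)
    (h2 : TwoContractible H) (hov : Overlapping ℓ H) {S : Finset α} (hS : IsCrosscut H S)
    (hSt : #S = t + 1) {δ : ℝ} (hδ : 0 < δ) :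
    ∃ M, ∀ᶠ n in atTop, ∃ 𝒞 : Finset (Finset (Finset ℕ)), #𝒞 ≤ (n + 1) ^ (M * (n + 1) ^ ℓ) ∧
      (∀ C ∈ 𝒞, C ⊆ powersetCard (r + 2) (vtx n) ∧ (#C : ℝ) ≤ (t + δ) * n.choose (r + 1)) ∧
      ∀ F ⊆ powersetCard (r + 2) (vtx n), HFree H F → ∃ C ∈ 𝒞, F ⊆ C := by
  set s := #(vertexSet H)
  set a := 2 ^ (r + 1) * s with ha
  set b : ℕ → ℕ := fun q => (2 * q) ^ r * r.factorial * a
  obtain ⟨q, hq, hlarge⟩ := exists_eventually_pow_mul_le_mul_choose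
    (fun q => a * a + b q * b q + 2 ^ b q * a * b q) a r hδ
  refine ⟨(ℓ + s + 2) * (2 ^ b q + 1), ?_⟩
  filter_upwards [hlarge, eventually_ge_atTop (2 * q * r), eventually_gt_atTop 0]
    with n hlarge hnq hn
  have hV := card_vtx n
  have hheavy : ∀ w ∈ decisionLists (vtx n) {()} ℓ s,
      #(heavyVertices (forced w) (vtx n) r (n / q)) ≤ b q := fun w hw => by
    simpa only [hV] using card_heavyVertices_le hw hq (hV.symm ▸ hnq)
  refine ⟨containers (vtx n) r (n / q) (t + 1) ℓ s, ?_, fun C hC => ?_, fun F hF hfree => ?_⟩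
  · simpa only [hV] using card_containers_le (card_pos.1 (hV.symm ▸ hn)) hheavy
  · obtain ⟨w, hw, W, hW, rfl⟩ := mem_containers.1 hC
    refine ⟨filter_subset _ _, ?_⟩
    have hcard := card_container_le hw (hheavy w hw) hW ha.ge
    rw [hV] at hcard
    calc (#(container (vtx n) r (n / q) (t + 1) w W) : ℝ)
        ≤ n ^ r * ((a * a + b q * b q + 2 ^ b q * a * b q : ℕ) + (n / q : ℕ) * a) +
          t * n.choose (r + 1) := by exact_mod_cast hcard
      _ ≤ (t + δ) * n.choose (r + 1) := by linarith
  · rw [← hSt]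
    exact hfree.exists_subset_container hH h2 hov hS hF _

end Containers

section RandomSubset

/-- The probability of the outcome `G` when every element of `K` is kept independently with
probability `p`. -/
noncomputable def subsetWeight (p : ℝ) (K G : Finset ι) : ℝ := p ^ #G * (1 - p) ^ (#K - #G)

/-- The probability of the event `A` when every element of `K` is kept independently with
probability `p`. -/
noncomputable def subsetProb (p : ℝ) (K : Finset ι) (A : Finset ι → Prop) : ℝ :=
  ∑ G ∈ K.powerset with A G, subsetWeight p K G

variable {p x m : ℝ} {K C : Finset ι} {A : Finset ι → Prop}

lemma subsetWeight_nonneg (hp : p ∈ Set.Icc (0 : ℝ) 1) (K G : Finset ι) :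
    0 ≤ subsetWeight p K G :=
  mul_nonneg (pow_nonneg hp.1 _) (pow_nonneg (sub_nonneg.2 hp.2) _)

lemma sum_subsetWeight_mul_exp [DecidableEq ι] (p x : ℝ) (hC : C ⊆ K) :
    ∑ G ∈ K.powerset, subsetWeight p K G * Real.exp (x * #(G ∩ C)) =
      (1 + p * (Real.exp x - 1)) ^ #C := by
  calc ∑ G ∈ K.powerset, subsetWeight p K G * Real.exp (x * #(G ∩ C))
      = ∑ G ∈ K.powerset, (∏ i ∈ G, p * if i ∈ C then Real.exp x else 1) * ∏ i ∈ K \ G, (1 - p) :=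
        sum_congr rfl fun G hG => by
          rw [prod_mul_distrib, prod_const, prod_ite_mem, prod_const, prod_const,
            card_sdiff_of_subset (mem_powerset.1 hG), subsetWeight, ← Real.exp_nat_mul, mul_comm x]
          ring
    _ = ∏ i ∈ K, ((p * if i ∈ C then Real.exp x else 1) + (1 - p)) := (prod_add ..).symm
    _ = ∏ i ∈ K, if i ∈ C then 1 + p * (Real.exp x - 1) else 1 :=
        prod_congr rfl fun i _ => by split_ifs <;> ring
    _ = (1 + p * (Real.exp x - 1)) ^ #C := by
        rw [prod_ite_mem, prod_const, inter_eq_right.2 hC]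

lemma sum_subsetWeight (p : ℝ) (K : Finset ι) : ∑ G ∈ K.powerset, subsetWeight p K G = 1 := by
  simpa using sum_subsetWeight_mul_exp p 0 (empty_subset K)

lemma subsetProb_le_one (hp : p ∈ Set.Icc (0 : ℝ) 1) (K : Finset ι) (A : Finset ι → Prop) :
    subsetProb p K A ≤ 1 :=
  (sum_le_sum_of_subset_of_nonneg (filter_subset _ _) fun G _ _ =>
    subsetWeight_nonneg hp K G).trans_eq (sum_subsetWeight p K)

lemma one_le_subsetProb_add (hp : p ∈ Set.Icc (0 : ℝ) 1) {B₀ : Finset ι → Prop} {s : Finset κ}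
    {B : κ → Finset ι → Prop} (hA : ∀ G ⊆ K, A G ∨ B₀ G ∨ ∃ j ∈ s, B j G) :
    1 ≤ subsetProb p K A + (subsetProb p K B₀ + ∑ j ∈ s, subsetProb p K (B j)) := by
  simp only [subsetProb, sum_filter]
  rw [sum_comm, ← sum_add_distrib, ← sum_add_distrib, ← sum_subsetWeight p K]
  refine sum_le_sum fun G hG => ?_
  have hw := subsetWeight_nonneg hp K G
  have hterm : ∀ P : Prop, 0 ≤ if P then subsetWeight p K G else 0 := fun P => by
    split_ifs <;> simp only [hw, le_refl]
  have hsum := sum_nonneg fun j (_ : j ∈ s) => hterm (B j G)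
  rcases hA G (mem_powerset.1 hG) with h | h | ⟨j, hj, h⟩
  · rw [if_pos h]
    linarith [hterm (B₀ G)]
  · rw [if_pos h]
    linarith [hterm (A G)]
  · have := single_le_sum (fun j _ => hterm (B j G)) hj
    rw [if_pos h] at this
    linarith [hterm (A G), hterm (B₀ G)]

lemma subsetProb_le_exp_sub [DecidableEq ι] (hp : p ∈ Set.Icc (0 : ℝ) 1) (hC : C ⊆ K) {a : ℝ}
    (hA : ∀ G ⊆ K, A G → a ≤ x * #(G ∩ C)) :
    subsetProb p K A ≤ Real.exp (p * #C * (Real.exp x - 1) - a) := by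
  have hbase : 0 ≤ 1 + p * (Real.exp x - 1) := by nlinarith [hp.1, hp.2, Real.exp_pos x]
  calc subsetProb p K A
      ≤ ∑ G ∈ K.powerset with A G, subsetWeight p K G * Real.exp (x * #(G ∩ C) - a) :=
        sum_le_sum fun G hG => le_mul_of_one_le_right (subsetWeight_nonneg hp K G) <|
          Real.one_le_exp <| sub_nonneg.2 <|
            hA G (mem_powerset.1 (mem_filter.1 hG).1) (mem_filter.1 hG).2
    _ ≤ ∑ G ∈ K.powerset, subsetWeight p K G * Real.exp (x * #(G ∩ C) - a) :=
        sum_le_sum_of_subset_of_nonneg (filter_subset _ _) fun G _ _ =>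
          mul_nonneg (subsetWeight_nonneg hp K G) (Real.exp_pos _).le
    _ = (1 + p * (Real.exp x - 1)) ^ #C * Real.exp (-a) := by
        simp only [sub_eq_add_neg _ a, Real.exp_add, ← mul_assoc]
        rw [← sum_mul, sum_subsetWeight_mul_exp p x hC]
    _ ≤ Real.exp (p * (Real.exp x - 1)) ^ #C * Real.exp (-a) := by
        gcongr
        linarith [Real.add_one_le_exp (p * (Real.exp x - 1))]
    _ = Real.exp (p * #C * (Real.exp x - 1) - a) := by
        rw [← Real.exp_nat_mul, ← Real.exp_add]
        ring_nf

/-- Positive `x` gives Chernoff's bound for the upper tail, negative `x` the one for the lower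
tail. -/
lemma subsetProb_le_exp_neg_sq [DecidableEq ι] (hp : p ∈ Set.Icc (0 : ℝ) 1) (hC : C ⊆ K)
    (hx : |x| ≤ 1) (hm : p * #C ≤ m)
    (hA : ∀ G ⊆ K, A G → x * (p * #C) + 2 * x ^ 2 * m ≤ x * #(G ∩ C)) :
    subsetProb p K A ≤ Real.exp (-(x ^ 2 * m)) := by
  refine (subsetProb_le_exp_sub hp hC hA).trans (Real.exp_le_exp.2 ?_)
  have hexp := (abs_le.1 (Real.abs_exp_sub_one_sub_id_le hx)).2
  have hmean : 0 ≤ p * #C := mul_nonneg hp.1 (Nat.cast_nonneg _)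
  nlinarith [mul_le_mul_of_nonneg_left hexp hmean, mul_le_mul_of_nonneg_left hm (sq_nonneg x)]

lemma subsetProb_tails_le [DecidableEq ι] {μ δ N : ℝ} (hp : p ∈ Set.Icc (0 : ℝ) 1) (hC : C ⊆ K)
    (hμ : 0 ≤ μ) (hδ : 0 < δ) (hCN : (#C : ℝ) ≤ (μ + δ) * N) :
    subsetProb p K (fun G => p * #C + δ * (p * N) ≤ #(G ∩ C)) ≤
        Real.exp (-(δ ^ 2 / (4 * (μ + δ)) * (p * N))) ∧
      subsetProb p K (fun G => (#(G ∩ C) : ℝ) ≤ p * #C - δ * (p * N)) ≤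
        Real.exp (-(δ ^ 2 / (4 * (μ + δ)) * (p * N))) := by
  have : 0 < μ + δ := by positivity
  set x := δ / (2 * (μ + δ)) with hx
  have hx0 : 0 ≤ x := by positivity
  have hx1 : x ≤ 1 := (div_le_one (by positivity)).2 (by linarith)
  have hm : p * #C ≤ (μ + δ) * (p * N) := by nlinarith [mul_le_mul_of_nonneg_left hCN hp.1]
  have hdev : 2 * x ^ 2 * ((μ + δ) * (p * N)) = x * (δ * (p * N)) := by
    rw [hx]
    field_simp
  have hexp : δ ^ 2 / (4 * (μ + δ)) * (p * N) = x ^ 2 * ((μ + δ) * (p * N)) := by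
    rw [hx]
    field_simp
    ring
  rw [hexp]
  constructor
  · refine subsetProb_le_exp_neg_sq hp hC (abs_le.2 ⟨by linarith, hx1⟩) hm fun G _ hG => ?_
    rw [hdev, ← mul_add]
    exact mul_le_mul_of_nonneg_left hG hx0
  · rw [← neg_sq x] at hdev ⊢
    refine subsetProb_le_exp_neg_sq hp hC (abs_le.2 ⟨by linarith, by linarith⟩) hm fun G _ hG => ?_
    rw [hdev]
    linarith [mul_le_mul_of_nonneg_left hG hx0]

end RandomSubset

section Stars

/-- The `k`-sets in `V` that meet `L` in exactly one vertex. -/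
def starFamily [DecidableEq ι] (V L : Finset ι) (k : ℕ) : Finset (Finset ι) :=
  {E ∈ powersetCard k V | #(E ∩ L) = 1}

lemma injOn_insert_of_disjoint [DecidableEq ι] (L : Finset ι) :
    Set.InjOn (fun z : ι × Finset ι => insert z.1 z.2) {z | z.1 ∈ L ∧ Disjoint z.2 L} := by
  rintro ⟨x, D⟩ ⟨hx : x ∈ L, hD : Disjoint D L⟩ ⟨x', D'⟩
    ⟨hx' : x' ∈ L, hD' : Disjoint D' L⟩ (h : insert x D = insert x' D')
  have hfst : x = x' := singleton_injective <| by
    simpa only [insert_inter_of_mem hx, insert_inter_of_mem hx', disjoint_iff_inter_eq_empty.1 hD,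
      disjoint_iff_inter_eq_empty.1 hD', insert_empty_eq] using congrArg (· ∩ L) h
  have hsnd : D = D' := by
    simpa only [insert_sdiff_of_mem _ hx, insert_sdiff_of_mem _ hx', sdiff_eq_self_of_disjoint hD,
      sdiff_eq_self_of_disjoint hD'] using congrArg (· \ L) h
  rw [hfst, hsnd]

lemma card_starFamily [DecidableEq ι] {V L : Finset ι} (hL : L ⊆ V) (r : ℕ) :
    #(starFamily V L (r + 1)) = #L * (#V - #L).choose r := by
  rw [← card_sdiff_of_subset hL, ← card_powersetCard, ← card_product, eq_comm]
  have hdisj : ∀ D ∈ powersetCard r (V \ L), Disjoint D L := fun D hD =>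
    disjoint_of_subset_left (mem_powersetCard.1 hD).1 sdiff_disjoint
  refine card_nbij (fun z => insert z.1 z.2) (fun z hz => ?_)
    ((injOn_insert_of_disjoint L).mono fun z hz => ?_) fun E hE => ?_
  · obtain ⟨hx, hD⟩ := mem_product.1 hz
    obtain ⟨hDV, hDr⟩ := mem_powersetCard.1 hD
    refine mem_filter.2
      ⟨mem_powersetCard.2 ⟨insert_subset (hL hx) (hDV.trans sdiff_subset), ?_⟩, ?_⟩
    · rw [card_insert_of_notMem fun hxD => (mem_sdiff.1 (hDV hxD)).2 hx, hDr]
    · rw [insert_inter_of_mem hx, disjoint_iff_inter_eq_empty.1 (hdisj z.2 hD), insert_empty_eq,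
        card_singleton]
  · exact ⟨(mem_product.1 hz).1, hdisj z.2 (mem_product.1 hz).2⟩
  · obtain ⟨hE, hEL⟩ := mem_filter.1 hE
    obtain ⟨hEV, hEr⟩ := mem_powersetCard.1 hE
    obtain ⟨x, hx⟩ := card_eq_one.1 hEL
    obtain ⟨hxE, hxL⟩ := mem_inter.1 (hx ▸ mem_singleton_self x)
    refine ⟨(x, E.erase x), mem_product.2 ⟨hxL, mem_powersetCard.2 ⟨fun y hy => ?_, ?_⟩⟩,
      insert_erase hxE⟩
    · obtain ⟨hyx, hyE⟩ := mem_erase.1 hy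
      exact mem_sdiff.2 ⟨hEV hyE, fun hyL =>
        hyx (mem_singleton.1 (hx ▸ mem_inter.2 ⟨hyE, hyL⟩))⟩
    · rw [card_erase_of_mem hxE, hEr, Nat.add_sub_cancel]

lemma hFree_of_card_inter_eq_one [DecidableEq α] {H : Finset (Finset α)} {F : Finset (Finset ℕ)}
    {L : Finset ℕ} (hF : ∀ E ∈ F, #(E ∩ L) = 1) (hL : ∀ S, IsCrosscut H S → #L < #S) :
    HFree H F := by
  rintro _ hK ⟨φ, hφ, rfl⟩
  set S := {v ∈ vertexSet H | φ v ∈ L} with hS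
  have hcrosscut : IsCrosscut H S := fun E hE => by
    have himage : E.image φ ∩ L = (E ∩ S).image φ := by
      ext y
      simp only [mem_inter, mem_image, hS, mem_filter]
      constructor
      · rintro ⟨⟨v, hv, rfl⟩, hy⟩
        exact ⟨v, ⟨hv, subset_vertexSet hE hv, hy⟩, rfl⟩
      · rintro ⟨v, ⟨hv, -, hy⟩, rfl⟩
        exact ⟨⟨v, hv, rfl⟩, hy⟩
    rw [← card_image_of_injOn (hφ.mono fun v hv => subset_vertexSet hE (mem_inter.1 hv).1),
      ← himage]
    exact hF _ (hK (mem_image_of_mem _ hE))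
  refine (hL S hcrosscut).not_ge (card_le_card_of_injOn φ (fun v hv => (mem_filter.1 hv).2) ?_)
  exact hφ.mono fun v hv => (mem_filter.1 hv).1

lemma choose_add_le (m r j : ℕ) :
    (m + j).choose (r + 1) ≤ m.choose (r + 1) + j * (m + j) ^ r := by
  induction j with
  | zero => simp only [add_zero, zero_mul, le_refl]
  | succ j ih =>
    calc (m + j + 1).choose (r + 1) = (m + j).choose r + (m + j).choose (r + 1) :=
          Nat.choose_succ_succ _ _
      _ ≤ (m + j) ^ r + (m.choose (r + 1) + j * (m + j) ^ r) :=
          add_le_add (Nat.choose_le_pow _ _) ih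
      _ = m.choose (r + 1) + (j + 1) * (m + j) ^ r := by ring
      _ ≤ m.choose (r + 1) + (j + 1) * (m + j + 1) ^ r :=
          Nat.add_le_add_left (Nat.mul_le_mul_left _ (Nat.pow_le_pow_left (Nat.le_succ _) r)) _

lemma eventually_le_mul_choose_sub (t r : ℕ) {δ : ℝ} (hδ : 0 < δ) :
    ∀ᶠ n : ℕ in atTop, (t - δ) * n.choose (r + 1) ≤ t * (n - t).choose (r + 1) := by
  filter_upwards [eventually_mul_pow_le_mul_choose (t * t) r hδ, eventually_ge_atTop t]
    with n hpow hn
  have hchoose := choose_add_le (n - t) r t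
  rw [Nat.sub_add_cancel hn] at hchoose
  have hchoose : (n.choose (r + 1) : ℝ) ≤ (n - t).choose (r + 1) + t * (n : ℝ) ^ r := by
    exact_mod_cast hchoose
  nlinarith [mul_le_mul_of_nonneg_left hchoose (Nat.cast_nonneg (α := ℝ) t)]

lemma exists_star [DecidableEq α] {H : Finset (Finset α)} {t : ℕ}
    (ht : ∀ S, IsCrosscut H S → t < #S) (r : ℕ) {δ : ℝ} (hδ : 0 < δ) :
    ∀ᶠ n in atTop, ∃ T ⊆ powersetCard (r + 2) (vtx n), (∀ F ⊆ T, HFree H F) ∧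
      (t - δ) * n.choose (r + 1) ≤ #T ∧ (#T : ℝ) ≤ t * n.choose (r + 1) := by
  filter_upwards [eventually_le_mul_choose_sub t r hδ, eventually_ge_atTop t] with n hlarge hn
  have hL : vtx t ⊆ vtx n := Icc_subset_Icc_right hn
  have hcard := card_starFamily hL (r + 1)
  rw [card_vtx, card_vtx] at hcard
  refine ⟨starFamily (vtx n) (vtx t) (r + 2), filter_subset _ _, fun F hF => ?_, ?_, ?_⟩
  · exact hFree_of_card_inter_eq_one (fun E hE => (mem_filter.1 (hF hE)).2)
      fun S hS => (card_vtx t).trans_lt (ht S hS)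
  · rw [hcard]
    exact_mod_cast hlarge
  · rw [hcard]
    exact_mod_cast Nat.mul_le_mul_left t (Nat.choose_le_choose (r + 1) (Nat.sub_le n t))

end Stars

section RandomTuran

variable [DecidableEq α] {H : Finset (Finset α)} {K G F T : Finset (Finset ℕ)}
  {𝒞 : Finset (Finset (Finset ℕ))} {p μ δ N : ℝ} {r t ℓ : ℕ}

lemma HFree.card_le_exIn (hF : HFree H F) (hFG : F ⊆ G) : #F ≤ exIn H G :=
  le_sup (f := card) (mem_filter.2 ⟨mem_powerset.2 hFG, hF⟩)

lemma exIn_le {a : ℝ} (ha : 0 ≤ a) (h : ∀ F ⊆ G, HFree H F → (#F : ℝ) ≤ a) :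
    (exIn H G : ℝ) ≤ a :=
  (Nat.le_floor_iff ha).1 <| Finset.sup_le fun F hF =>
    Nat.le_floor (h F (mem_powerset.1 (mem_filter.1 hF).1) (mem_filter.1 hF).2)

lemma one_sub_le_subsetProb_exIn (hp : p ∈ Set.Icc (0 : ℝ) 1) (hμ : 0 ≤ μ) (hδ : 0 < δ)
    (hN : 0 ≤ N) (h𝒞 : ∀ C ∈ 𝒞, C ⊆ K ∧ (#C : ℝ) ≤ (μ + δ) * N)
    (hcover : ∀ F ⊆ K, HFree H F → ∃ C ∈ 𝒞, F ⊆ C) (hTK : T ⊆ K) (hT : ∀ F ⊆ T, HFree H F)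
    (hTlarge : (μ - δ) * N ≤ #T) (hTsmall : (#T : ℝ) ≤ μ * N) :
    1 - (#𝒞 + 1) * Real.exp (-(δ ^ 2 / (4 * (μ + δ)) * (p * N))) ≤
      subsetProb p K fun G => (μ - 2 * δ) * p * N ≤ exIn H G ∧ exIn H G ≤ (μ + 2 * δ) * p * N := by
  have hpN : 0 ≤ p * N := mul_nonneg hp.1 hN
  have hupper := sum_le_sum fun C hC =>
    (subsetProb_tails_le hp (h𝒞 C hC).1 hμ hδ (h𝒞 C hC).2).1
  have hTN : (#T : ℝ) ≤ (μ + δ) * N := by nlinarith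
  have hlower := (subsetProb_tails_le hp hTK hμ hδ hTN).2
  rw [sum_const, nsmul_eq_mul] at hupper
  refine sub_le_iff_le_add.2 <| (one_le_subsetProb_add hp fun G hG => ?_).trans <|
    add_le_add_right ((add_le_add hlower hupper).trans_eq (by ring)) _
  by_contra! hcon
  obtain ⟨hA, hTG, hCG⟩ := hcon
  refine (hA ?_).not_ge (exIn_le (by rw [mul_assoc]; positivity) fun F hFG hF => ?_)
  · have hTG' : (#(G ∩ T) : ℝ) ≤ exIn H G := by
      exact_mod_cast (hT _ inter_subset_right).card_le_exIn inter_subset_left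
    nlinarith [mul_le_mul_of_nonneg_left hTlarge hp.1]
  · obtain ⟨C, hC, hFC⟩ := hcover F (hFG.trans hG) hF
    have hFC' : (#F : ℝ) ≤ #(G ∩ C) := by exact_mod_cast card_le_card (subset_inter hFG hFC)
    nlinarith [hCG C hC, mul_le_mul_of_nonneg_left (h𝒞 C hC).2 hp.1]

theorem exists_eventually_one_sub_le_probEvent (hH : IsKTree (r + 2) H) (h2 : TwoContractible H)
    (hov : Overlapping ℓ H) (hσ : IsCrosscutNumber H (t + 1)) {ε : ℝ} (hε : 0 < ε) :
    ∃ (M : ℕ) (c : ℝ), 0 < c ∧ ∀ᶠ n : ℕ in atTop, ∀ p ∈ Set.Icc (0 : ℝ) 1,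
      1 - 2 * ((n + 1 : ℝ) ^ (M * (n + 1) ^ ℓ) * Real.exp (-(c * (p * n.choose (r + 1))))) ≤
        probEvent (r + 2) n p fun G => (t - ε) * p * n.choose (r + 1) ≤ exIn H G ∧
          exIn H G ≤ (t + ε) * p * n.choose (r + 1) := by
  obtain ⟨S, hS, hSt⟩ := hσ.1
  obtain ⟨M, hM⟩ := exists_containers hH h2 hov hS hSt (half_pos hε)
  have hmin : ∀ S, IsCrosscut H S → t < #S := fun S hS => hσ.2 ⟨S, hS, rfl⟩
  refine ⟨M, (ε / 2) ^ 2 / (4 * (t + ε / 2)), by positivity, ?_⟩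
  filter_upwards [hM, exists_star hmin r (half_pos hε)]
    with n ⟨𝒞, hcard, h𝒞, hcover⟩ ⟨T, hTK, hT, hTlarge, hTsmall⟩ p hp
  have hprob := one_sub_le_subsetProb_exIn hp t.cast_nonneg (half_pos hε) (Nat.cast_nonneg _) h𝒞
    hcover hTK hT hTlarge hTsmall
  rw [mul_div_cancel₀ ε two_ne_zero] at hprob
  rw [← mul_assoc]
  refine le_trans (sub_le_sub_left (mul_le_mul_of_nonneg_right ?_ (Real.exp_pos _).le) 1) hprob
  have hcard : (#𝒞 : ℝ) ≤ (n + 1 : ℝ) ^ (M * (n + 1) ^ ℓ) := by exact_mod_cast hcard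
  linarith [one_le_pow₀ (n := M * (n + 1) ^ ℓ) (show (1 : ℝ) ≤ n + 1 by simp)]

end RandomTuran

section Growth

variable {p : ℕ → ℝ} {ℓ r k : ℕ}

lemma eventually_one_le_log : ∀ᶠ n : ℕ in atTop, 1 ≤ Real.log n :=
  (Real.tendsto_log_atTop.comp tendsto_natCast_atTop_atTop).eventually_ge_atTop 1

/-- The exponent `k - ℓ - 1` is truncated, so for `k ≤ ℓ` the growth condition would read
`p n / log n → ∞`. -/
lemma lt_of_tendsto_mul_pow_div_log (hp : ∀ n, p n ≤ 1)
    (hgrow : Tendsto (fun n : ℕ => p n * (n : ℝ) ^ (k - ℓ - 1) / Real.log n) atTop atTop) :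
    ℓ < k := by
  by_contra! hkl
  rw [Nat.sub_eq_zero_of_le hkl, Nat.zero_sub] at hgrow
  obtain ⟨n, hn, hlog⟩ := ((hgrow.eventually_ge_atTop 2).and eventually_one_le_log).exists
  rw [pow_zero, mul_one, le_div_iff₀ (by positivity)] at hn
  linarith [hp n]

lemma eventually_mul_pow_mul_log_le (hp : ∀ n, 0 ≤ p n) (hℓ : ℓ ≤ r)
    (hgrow : Tendsto (fun n : ℕ => p n * (n : ℝ) ^ (r - ℓ) / Real.log n) atTop atTop) (A : ℝ) :
    ∀ᶠ n : ℕ in atTop, A * (n ^ ℓ * Real.log n) ≤ p n * n.choose r := by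
  obtain ⟨c, hc, hpow⟩ := exists_eventually_pow_le_mul_choose r
  filter_upwards [hpow, hgrow.eventually_ge_atTop (A * c), eventually_one_le_log]
    with n hpow hgrow hlog
  refine le_of_mul_le_mul_left ?_ hc
  calc c * (A * (n ^ ℓ * Real.log n)) = A * c * Real.log n * n ^ ℓ := by ring
    _ ≤ p n * n ^ (r - ℓ) * n ^ ℓ :=
        mul_le_mul_of_nonneg_right ((le_div_iff₀ (by positivity)).1 hgrow) (by positivity)
    _ = p n * n ^ r := by rw [mul_assoc, pow_sub_mul_pow _ hℓ]
    _ ≤ p n * (c * n.choose r) := mul_le_mul_of_nonneg_left hpow (hp n)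
    _ = c * (p n * n.choose r) := by ring

lemma add_one_pow_le_exp {n : ℕ} (hn : 2 ≤ n) (M ℓ : ℕ) :
    (n + 1 : ℝ) ^ (M * (n + 1) ^ ℓ) ≤ Real.exp (M * 2 ^ (ℓ + 1) * (n ^ ℓ * Real.log n)) := by
  have hn2 : (2 : ℝ) ≤ n := by exact_mod_cast hn
  have hlog : Real.log (n + 1) ≤ 2 * Real.log n := by
    rw [← Nat.cast_two, ← Real.log_pow]
    exact Real.log_le_log (by positivity) (by nlinarith)
  rw [← Real.log_le_iff_le_exp (by positivity), Real.log_pow]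
  push_cast
  calc (M : ℝ) * (n + 1) ^ ℓ * Real.log (n + 1)
      ≤ M * (2 * n) ^ ℓ * (2 * Real.log n) := by
        gcongr
        · exact Real.log_nonneg (by linarith)
        · linarith
    _ = M * 2 ^ (ℓ + 1) * (n ^ ℓ * Real.log n) := by rw [mul_pow]; ring

lemma tendsto_pow_mul_exp_neg (hp : ∀ n, 0 ≤ p n) (hℓ : ℓ ≤ r)
    (hgrow : Tendsto (fun n : ℕ => p n * (n : ℝ) ^ (r - ℓ) / Real.log n) atTop atTop)
    (M : ℕ) {c : ℝ} (hc : 0 < c) :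
    Tendsto (fun n : ℕ => (n + 1 : ℝ) ^ (M * (n + 1) ^ ℓ) *
      Real.exp (-(c * (p n * n.choose r)))) atTop (nhds 0) := by
  refine squeeze_zero' (.of_forall fun n => by positivity) ?_ tendsto_inv_atTop_nhds_zero_nat
  filter_upwards [eventually_mul_pow_mul_log_le hp hℓ hgrow ((M * 2 ^ (ℓ + 1) + 1) / c),
    eventually_one_le_log, eventually_ge_atTop 2] with n hlarge hlog hn
  have hn0 : (0 : ℝ) < n := by exact_mod_cast two_pos.trans_le hn
  rw [div_mul_eq_mul_div, div_le_iff₀' hc] at hlarge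
  have hlog' : Real.log n ≤ n ^ ℓ * Real.log n :=
    le_mul_of_one_le_left (by positivity) (one_le_pow₀ (by exact_mod_cast one_le_two.trans hn))
  calc (n + 1 : ℝ) ^ (M * (n + 1) ^ ℓ) * Real.exp (-(c * (p n * n.choose r)))
      ≤ Real.exp (M * 2 ^ (ℓ + 1) * (n ^ ℓ * Real.log n)) *
          Real.exp (-(c * (p n * n.choose r))) :=
        mul_le_mul_of_nonneg_right (add_one_pow_le_exp hn M ℓ) (Real.exp_pos _).le
    _ ≤ Real.exp (-Real.log n) := by
        rw [← Real.exp_add]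
        exact Real.exp_le_exp.2 (by linarith)
    _ = (n : ℝ)⁻¹ := by rw [Real.exp_neg, Real.exp_log hn0]

lemma tendsto_mul_pow_div_log_of_sq (hp : ∀ n, 0 ≤ p n) (s : ℕ)
    (hgrow : Tendsto (fun n : ℕ => p n * (n : ℝ) ^ s / Real.log n ^ 2) atTop atTop) :
    Tendsto (fun n : ℕ => p n * (n : ℝ) ^ s / Real.log n) atTop atTop := by
  refine tendsto_atTop_mono' _ ?_ hgrow
  filter_upwards [eventually_one_le_log] with n hlog
  exact div_le_div_of_nonneg_left (mul_nonneg (hp n) (by positivity)) (by positivity)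
    (le_self_pow₀ hlog two_ne_zero)

end Growth

lemma IsKTree.two_le_of_twoContractible [DecidableEq α] {H : Finset (Finset α)} {k : ℕ}
    (hH : IsKTree k H) (h2 : TwoContractible H) : 2 ≤ k := by
  obtain ⟨E, hE⟩ := hH.1.nonempty
  exact hH.2 E hE ▸ (h2 E hE).trans (card_le_card (filter_subset _ _))

lemma IsCrosscutNumber.pos [DecidableEq α] {H : Finset (Finset α)} {σ : ℕ}
    (hσ : IsCrosscutNumber H σ) (hH : H.Nonempty) : 0 < σ := by
  obtain ⟨⟨S, hS, rfl⟩, -⟩ := hσ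
  obtain ⟨E, hE⟩ := hH
  exact card_pos.2 ((card_pos.1 (hS E hE ▸ one_pos)).mono inter_subset_right)

theorem stmt_2_general {α : Type} [DecidableEq α] (k ℓ : ℕ) (H : Finset (Finset α))
    (hH : IsKTree k H) (h2 : TwoContractible H) (hov : Overlapping ℓ H) (σ : ℕ)
    (hσ : IsCrosscutNumber H σ) (p : ℕ → ℝ) (hp : ∀ n, p n ∈ Set.Icc (0 : ℝ) 1)
    (hgrow : Tendsto (fun n : ℕ => p n * (n : ℝ) ^ (k - ℓ - 1) / Real.log n) atTop atTop) :
    ∀ ε : ℝ, 0 < ε →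
      Tendsto (fun n : ℕ => probEvent k n (p n) (fun G =>
          ((σ : ℝ) - 1 - ε) * p n * (n.choose (k - 1) : ℝ) ≤ (exIn H G : ℝ) ∧
          (exIn H G : ℝ) ≤ ((σ : ℝ) - 1 + ε) * p n * (n.choose (k - 1) : ℝ)))
        atTop (nhds 1) := by
  intro ε hε
  have hℓ := lt_of_tendsto_mul_pow_div_log (fun n => (hp n).2) hgrow
  obtain ⟨r, rfl⟩ := Nat.exists_eq_add_of_le' (hH.two_le_of_twoContractible h2)
  obtain ⟨t, rfl⟩ := Nat.exists_eq_add_of_le' (hσ.pos hH.1.nonempty)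
  rw [Nat.sub_right_comm] at hgrow
  simp only [Nat.cast_add, Nat.cast_one, add_sub_cancel_right]
  obtain ⟨M, c, hc, hprob⟩ := exists_eventually_one_sub_le_probEvent hH h2 hov hσ hε
  have hlim := ((tendsto_pow_mul_exp_neg (fun n => (hp n).1) (Nat.le_of_lt_succ hℓ) hgrow M
    hc).const_mul 2).const_sub 1
  rw [mul_zero, sub_zero] at hlim
  exact tendsto_of_tendsto_of_tendsto_of_le_of_le' hlim tendsto_const_nhds
    (hprob.mono fun n hn => hn (p n) (hp n)) (.of_forall fun n => subsetProb_le_one (hp n) _ _)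

/-- random Turán for 2-contractible `ℓ`-overlapping `k`-trees: for
`p·n^{k−ℓ−1}/(log n)² → ∞`, whp `ex(G^(k)(n,p),H) = (σ−1+o(1))·p·C(n,k−1)`. -/
theorem stmt_2 {α : Type} [DecidableEq α] (k ℓ : ℕ) (hk : 4 ≤ k)
    (H : Finset (Finset α)) (hH : IsKTree k H) (h2 : TwoContractible H)
    (hov : Overlapping ℓ H) (σ : ℕ) (hσ : IsCrosscutNumber H σ)
    (p : ℕ → ℝ) (hp : ∀ n, p n ∈ Set.Icc (0 : ℝ) 1)
    (hgrow : Tendsto (fun n : ℕ => p n * (n : ℝ) ^ (k - ℓ - 1) / (Real.log n) ^ 2)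
      atTop atTop) :
    ∀ ε : ℝ, 0 < ε →
      Tendsto (fun n : ℕ => probEvent k n (p n) (fun G =>
          ((σ : ℝ) - 1 - ε) * p n * (n.choose (k - 1) : ℝ) ≤ (exIn H G : ℝ) ∧
          (exIn H G : ℝ) ≤ ((σ : ℝ) - 1 + ε) * p n * (n.choose (k - 1) : ℝ)))
        atTop (nhds 1) := by
  exact stmt_2_general k ℓ H hH h2 hov σ hσ p hp
    (tendsto_mul_pow_div_log_of_sq (fun n => (hp n).1) _ hgrow)
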